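/- arXiv:2107.02325 — 3 statements merged into one kernel-verified Lean document; each statement's English description precedes it below -/
import Mathlib

section
/- For a ternary cubic form f over ℂ, the following are equivalent: (1) the Hessian determinant det(∂ᵢ∂ⱼ f) is the zero polynomial and there exist y, z ∈ ℂ³ such that the restriction of f to the line through y and z has nonzero discriminant; (2) f = a₀·a³ + b₀·b³ for some nonzero a₀, b₀ ∈ ℂ and linearly independent linear forms a, b; (3) f = a·b·c for linear forms a, b, c that are linearly dependent but pairwise linearly independent. -/
open MvPolynomial

/-- The Hessian determinant `det (∂ᵢ∂ⱼ f)` of a ternary form. -/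
noncomputable def hessianDet (f : MvPolynomial (Fin 3) ℂ) : MvPolynomial (Fin 3) ℂ :=
  Matrix.det (Matrix.of fun i j : Fin 3 => pderiv i (pderiv j f))

/-- The restriction of a ternary form `f` to the line through `y` and `z`:
the binary form `p(s,t) = f(s·y + t·z)` in the two variables `s = X 0`, `t = X 1`. -/
noncomputable def lineRestrict (f : MvPolynomial (Fin 3) ℂ) (y z : Fin 3 → ℂ) :
    MvPolynomial (Fin 2) ℂ :=
  aeval (fun i : Fin 3 => C (y i) * X 0 + C (z i) * X 1) f

/-- The discriminant `c₂²c₁² − 4c₃c₁³ − 4c₂³c₀ + 18c₃c₂c₁c₀ − 27c₃²c₀²` of a binary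
cubic `c₃s³ + c₂s²t + c₁st² + c₀t³`. -/
noncomputable def binCubicDisc (p : MvPolynomial (Fin 2) ℂ) : ℂ :=
  let c₃ := p.coeff (Finsupp.single 0 3)
  let c₂ := p.coeff (Finsupp.single 0 2 + Finsupp.single 1 1)
  let c₁ := p.coeff (Finsupp.single 0 1 + Finsupp.single 1 2)
  let c₀ := p.coeff (Finsupp.single 1 3)
  c₂ ^ 2 * c₁ ^ 2 - 4 * c₃ * c₁ ^ 3 - 4 * c₂ ^ 3 * c₀ + 18 * c₃ * c₂ * c₁ * c₀ -
    27 * c₃ ^ 2 * c₀ ^ 2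

/-- A linear form is a homogeneous polynomial of degree 1. -/
def IsLinearForm (a : MvPolynomial (Fin 3) ℂ) : Prop := a.IsHomogeneous 1

/-!
A cubic form `f` polarizes to a symmetric trilinear form `T` with `T x x x = 6 f(x)`. Restricted to
a line, the discriminant of the binary cubic `f` is, up to a constant, the discriminant of its
Hessian covariant, a binary quadratic form. When it does not vanish, the two distinct roots `u`, `v`
of that quadratic form satisfy `T u u v = T u v v = 0` and `T u u u, T v v v ≠ 0`. Vanishing of the
Hessian determinant of `f` then forces `T u v w = T u w w = T v w w = T w w w = 0` whenever
`T u u w = T v v w = 0`, and `f` becomes a combination of the cubes of the linear forms `T u u ·`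
and `T v v ·`.

Conversely a common zero of `a` and `b` is a direction in which `a₀ a³ + b₀ b³` has zero derivative,
which makes its Hessian matrix singular. Sums of two cubes and products of three dependent linear
forms are exchanged by factoring over the cube roots of unity.
-/

/-! ### Sums of two cubes and products of three factors -/

section Combinations

variable {K M : Type*} [Field K] [AddCommGroup M] [Module K M]

theorem not_linearIndependent_of_mem_span_pair {a b : M} {c : Fin 3 → M}
    (hc : ∀ i, c i ∈ Submodule.span K {a, b}) : ¬ LinearIndependent K c := by
  classical
  intro hli
  have hcard := linearIndependent_le_span_aux' c hli {a, b} (Set.range_subset_iff.mpr hc)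
  have htwo : Fintype.card ({a, b} : Set M) ≤ 2 := by
    rw [← Set.toFinset_card, Set.toFinset_insert, Set.toFinset_singleton]
    exact Finset.card_le_two
  simpa using hcard.trans htwo

theorem exists_eq_smul_add_smul_of_not_linearIndependent {a b c : M}
    (habc : ¬ LinearIndependent K ![a, b, c]) (hab : LinearIndependent K ![a, b])
    (hac : LinearIndependent K ![a, c]) (hbc : LinearIndependent K ![b, c]) :
    ∃ p q : K, p ≠ 0 ∧ q ≠ 0 ∧ c = p • a + q • b := by
  have hc : c ∈ Submodule.span K {a, b} := by
    by_contra hc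
    have hsnoc := hab.finSnoc (x := c) (by simpa [Set.pair_comm] using hc)
    refine habc ?_
    convert hsnoc using 1
    ext i
    fin_cases i <;> rfl
  obtain ⟨p, q, rfl⟩ := Submodule.mem_span_pair.mp hc
  refine ⟨p, q, ?_, ?_, rfl⟩
  · rintro rfl
    simpa using LinearIndependent.pair_iff.mp hbc q (-1) (by simp)
  · rintro rfl
    simpa using LinearIndependent.pair_iff.mp hac p (-1) (by simp)

end Combinations

section Cubes

variable {K A : Type*} [Field K] [CommRing A] [Algebra K A]

theorem cube_add_cube_eq_mul {ω : K} (hω : IsPrimitiveRoot ω 3) (a b : A) :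
    a ^ 3 + b ^ 3 = (a + b) * (a + ω • b) * (a + ω ^ 2 • b) := by
  have hgeom := congrArg (algebraMap K A) (hω.geom_sum_eq_zero (by norm_num))
  simp only [Finset.sum_range_succ, Finset.sum_range_zero, map_add, map_pow, map_zero] at hgeom
  simp only [Algebra.smul_def, map_pow]
  set W := algebraMap K A ω
  linear_combination (b ^ 3 * (1 - W) - a ^ 2 * b - a * b ^ 2 * W) * hgeom

theorem cube_sub_cube_eq_smul_mul {ω : K} (hω : IsPrimitiveRoot ω 3) (a b : A) :
    (a - ω • b) ^ 3 - (a - ω ^ 2 • b) ^ 3 = (3 * (ω ^ 2 - ω)) • (a * b * (a + b)) := by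
  have hcube := congrArg (algebraMap K A) hω.pow_eq_one
  simp only [map_pow, map_one] at hcube
  simp only [Algebra.smul_def, map_pow, map_mul, map_sub, map_ofNat]
  set W := algebraMap K A ω
  linear_combination (b ^ 3 * W ^ 3 - 3 * a * b ^ 2 * W) * hcube

theorem exists_isPrimitiveRoot_three [IsAlgClosed K] [NeZero (3 : K)] :
    ∃ ω : K, IsPrimitiveRoot ω 3 :=
  have : NeZero ((3 : ℕ) : K) := by simpa using ‹NeZero (3 : K)›
  HasEnoughRootsOfUnity.exists_primitiveRoot K 3

theorem exists_mul_eq_smul_cube_add_smul_cube [IsAlgClosed K] [NeZero (3 : K)] {a b : A}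
    (hab : LinearIndependent K ![a, b]) {a₀ b₀ : K} (ha₀ : a₀ ≠ 0) (hb₀ : b₀ ≠ 0) :
    ∃ c : Fin 3 → A, (∀ i, c i ∈ Submodule.span K {a, b}) ∧
      Pairwise (fun i j => LinearIndependent K ![c i, c j]) ∧
      c 0 * c 1 * c 2 = a₀ • a ^ 3 + b₀ • b ^ 3 := by
  obtain ⟨ω, hω⟩ := exists_isPrimitiveRoot_three (K := K)
  obtain ⟨p, rfl⟩ := IsAlgClosed.exists_pow_nat_eq a₀ three_pos
  obtain ⟨q, rfl⟩ := IsAlgClosed.exists_pow_nat_eq b₀ three_pos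
  have hp : p ≠ 0 := ne_zero_pow three_ne_zero ha₀
  have hq : q ≠ 0 := ne_zero_pow three_ne_zero hb₀
  refine ⟨fun i => p • a + (ω ^ (i : ℕ) * q) • b,
    fun i => Submodule.mem_span_pair.mpr ⟨_, _, rfl⟩, fun i j hij => ?_, ?_⟩
  · refine (LinearIndependent.pair_add_smul_add_smul_iff (S := K) _ _ _ _).mpr
      ⟨hab, fun hdet => hij ?_⟩
    have hpow : ω ^ (j : ℕ) = ω ^ (i : ℕ) :=
      mul_right_cancel₀ (mul_ne_zero hq hp) (by linear_combination hdet)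
    exact Fin.ext (hω.pow_inj j.2 i.2 hpow).symm
  · simpa [smul_pow, mul_smul] using (cube_add_cube_eq_mul hω (p • a) (q • b)).symm

theorem exists_smul_cube_add_smul_cube_eq_mul [IsAlgClosed K] [NeZero (3 : K)] {a b c : A}
    (habc : ¬ LinearIndependent K ![a, b, c]) (hab : LinearIndependent K ![a, b])
    (hac : LinearIndependent K ![a, c]) (hbc : LinearIndependent K ![b, c]) :
    ∃ a₀ b₀ : K, ∃ u ∈ Submodule.span K {a, b}, ∃ v ∈ Submodule.span K {a, b},
      a₀ ≠ 0 ∧ b₀ ≠ 0 ∧ LinearIndependent K ![u, v] ∧ a₀ • u ^ 3 + b₀ • v ^ 3 = a * b * c := by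
  obtain ⟨ω, hω⟩ := exists_isPrimitiveRoot_three (K := K)
  obtain ⟨p, q, hp, hq, rfl⟩ :=
    exists_eq_smul_add_smul_of_not_linearIndependent habc hab hac hbc
  have hω_sub : ω ^ 2 - ω ≠ 0 := by
    rw [show ω ^ 2 - ω = ω * (ω - 1) by ring]
    exact mul_ne_zero (hω.ne_zero three_ne_zero) (sub_ne_zero.mpr (hω.ne_one (by norm_num)))
  set k := 3 * (ω ^ 2 - ω) * (p * q) with hk_def
  have hk : k ≠ 0 := mul_ne_zero (mul_ne_zero three_ne_zero hω_sub) (mul_ne_zero hp hq)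
  refine ⟨k⁻¹, -k⁻¹, p • a + (-(ω * q)) • b, Submodule.mem_span_pair.mpr ⟨_, _, rfl⟩,
    p • a + (-(ω ^ 2 * q)) • b, Submodule.mem_span_pair.mpr ⟨_, _, rfl⟩, inv_ne_zero hk,
    neg_ne_zero.mpr (inv_ne_zero hk), ?_, ?_⟩
  · refine (LinearIndependent.pair_add_smul_add_smul_iff (S := K) _ _ _ _).mpr
      ⟨hab, fun hdet => mul_ne_zero hω_sub (mul_ne_zero hp hq) ?_⟩
    linear_combination -hdet
  · have hcubes : (p • a + (-(ω * q)) • b) ^ 3 - (p • a + (-(ω ^ 2 * q)) • b) ^ 3 =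
        k • (a * b * (p • a + q • b)) := by
      have hfactor := cube_sub_cube_eq_smul_mul hω (p • a) (q • b)
      simp only [hk_def, Algebra.smul_def, map_mul, map_neg] at hfactor ⊢
      linear_combination hfactor
    rw [neg_smul k⁻¹, ← sub_eq_add_neg, ← smul_sub, hcubes, inv_smul_smul₀ hk]

end Cubes

/-! ### Symmetric trilinear forms -/

theorem exists_independent_roots_of_discrim_ne_zero {K : Type*} [Field K] [IsAlgClosed K]
    [NeZero (2 : K)] {a b c : K} (h : discrim a b c ≠ 0) :
    ∃ p q r s : K, p * s - q * r ≠ 0 ∧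
      a * p ^ 2 + b * p * q + c * q ^ 2 = 0 ∧ a * r ^ 2 + b * r * s + c * s ^ 2 = 0 := by
  obtain rfl | ha := eq_or_ne a 0
  · have hb : b ≠ 0 := by rintro rfl; simp [discrim] at h
    exact ⟨1, 0, -c, b, by simpa using hb, by ring, by ring⟩
  · obtain ⟨d, hd⟩ := IsAlgClosed.exists_pow_nat_eq (discrim a b c) two_pos
    have hd₀ : d ≠ 0 := by rintro rfl; exact h (by simpa using hd.symm)
    rw [discrim] at hd
    refine ⟨-b + d, 2 * a, -b - d, 2 * a, ?_, by linear_combination a * hd,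
      by linear_combination a * hd⟩
    have hne : 2 * 2 * a * d ≠ 0 := by simp [ha, hd₀, NeZero.ne]
    convert hne using 1
    ring

/-- Trilinear forms on a module `V`, curried in their three arguments. -/
abbrev TrilinearForm (R V : Type*) [CommRing R] [AddCommGroup V] [Module R V] : Type _ :=
  V →ₗ[R] V →ₗ[R] V →ₗ[R] R

namespace TrilinearForm

variable {R K V : Type*} [CommRing R] [AddCommGroup V] [Module R V] {T : TrilinearForm R V}

/-- Symmetry of a trilinear form, expressed by the two adjacent transpositions, which generate all
permutations of the arguments. -/
structure IsSymm (T : TrilinearForm R V) : Prop where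
  swap_left : ∀ u v w, T u v w = T v u w
  swap_right : ∀ u v w, T u v w = T u w v

/-- The discriminant of the Hessian covariant of the binary cubic `T x x x`, `x = p • y + q • z`.
The three coefficients are those of `p ^ 2`, `p * q` and `q ^ 2` in the Hessian determinant of that
cubic, up to a common factor. -/
def hessianDiscrim (T : TrilinearForm R V) (y z : V) : R :=
  discrim (T y y y * T y z z - T y y z ^ 2) (T y y y * T z z z - T y y z * T y z z)
    (T y y z * T z z z - T y z z ^ 2)

/-- All bilinear forms `T x` have rank less than three, expressed by the vanishing of their
`3 × 3` Gram determinants. For the polarization of a ternary cubic this is the vanishing of the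
Hessian determinant. -/
def HasDegenerateContractions (T : TrilinearForm R V) : Prop :=
  ∀ (x : V) (e : Fin 3 → V), (Matrix.of fun i j => T x (e i) (e j)).det = 0

/-- Vectors `u`, `v` on whose span `T x x x` is a combination of two cubes with nonzero
coefficients: for `x = p • u + q • v` it equals `p ^ 3 * T u u u + q ^ 3 * T v v v` when `T` is
symmetric. -/
structure IsDiagonalPair (T : TrilinearForm R V) (u v : V) : Prop where
  left_ne_zero : T u u u ≠ 0
  right_ne_zero : T v v v ≠ 0
  apply_left_left_right : T u u v = 0
  apply_left_right_right : T u v v = 0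

theorem IsSymm.apply_combination (hT : T.IsSymm) (y z : V) (p₁ q₁ p₂ q₂ p₃ q₃ : R) :
    T (p₁ • y + q₁ • z) (p₂ • y + q₂ • z) (p₃ • y + q₃ • z) =
      p₁ * p₂ * p₃ * T y y y + (p₁ * p₂ * q₃ + p₁ * q₂ * p₃ + q₁ * p₂ * p₃) * T y y z +
        (p₁ * q₂ * q₃ + q₁ * p₂ * q₃ + q₁ * q₂ * p₃) * T y z z + q₁ * q₂ * q₃ * T z z z := by
  simp only [map_add, map_smul, LinearMap.add_apply, LinearMap.smul_apply, smul_eq_mul,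
    hT.swap_left z y, hT.swap_right _ z y]
  ring

theorem IsSymm.hessian_combination (hT : T.IsSymm) (y z : V) (p q r s : R) :
    T (p • y + q • z) (p • y + q • z) (p • y + q • z) *
        T (p • y + q • z) (r • y + s • z) (r • y + s • z) -
      T (p • y + q • z) (p • y + q • z) (r • y + s • z) ^ 2 =
    (p * s - q * r) ^ 2 * ((T y y y * T y z z - T y y z ^ 2) * p ^ 2 +
      (T y y y * T z z z - T y y z * T y z z) * p * q +
      (T y y z * T z z z - T y z z ^ 2) * q ^ 2) := by
  simp only [hT.apply_combination]
  ring

theorem IsSymm.hessianDiscrim_combination (hT : T.IsSymm) (y z : V) (p q r s : R) :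
    T.hessianDiscrim (p • y + q • z) (r • y + s • z) =
      (p * s - q * r) ^ 6 * T.hessianDiscrim y z := by
  simp only [hessianDiscrim, discrim, hT.apply_combination]
  ring

theorem IsSymm.isDiagonalPair_of_hessian_eq_zero [IsDomain R] (hT : T.IsSymm) {u v : V}
    (hu : T u u u * T u v v - T u u v ^ 2 = 0) (hv : T v v v * T v u u - T v v u ^ 2 = 0)
    (hdisc : T.hessianDiscrim u v ≠ 0) : T.IsDiagonalPair u v := by
  rw [hT.swap_left v u u, hT.swap_right u v u, hT.swap_right v v u, hT.swap_left v u v] at hv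
  have hmixed : T u u u * T v v v - T u u v * T u v v ≠ 0 := by
    contrapose! hdisc
    simp only [hessianDiscrim, discrim]
    linear_combination (T u u u * T v v v - T u u v * T u v v) * hdisc -
      4 * (T u u v * T v v v - T u v v ^ 2) * hu
  have huuv : T u u v = 0 := by
    refine (mul_eq_zero.mp ?_).resolve_right hmixed
    linear_combination T u u u * hv + T u v v * hu
  have huvv : T u v v = 0 := by
    refine (mul_eq_zero.mp ?_).resolve_right hmixed
    linear_combination T v v v * hu + T u u v * hv
  rw [huuv, zero_mul, sub_zero] at hmixed
  exact ⟨left_ne_zero_of_mul hmixed, right_ne_zero_of_mul hmixed, huuv, huvv⟩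

theorem IsSymm.exists_isDiagonalPair [Field K] [IsAlgClosed K] [NeZero (2 : K)] [Module K V]
    {T : TrilinearForm K V} (hT : T.IsSymm) {y z : V} (hdisc : T.hessianDiscrim y z ≠ 0) :
    ∃ u v, T.IsDiagonalPair u v := by
  obtain ⟨p, q, r, s, hdet, hpq, hrs⟩ := exists_independent_roots_of_discrim_ne_zero hdisc
  refine ⟨p • y + q • z, r • y + s • z, hT.isDiagonalPair_of_hessian_eq_zero ?_ ?_ ?_⟩
  · rw [hT.hessian_combination, hpq, mul_zero]
  · rw [hT.hessian_combination, hrs, mul_zero]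
  · rw [hT.hessianDiscrim_combination]
    exact mul_ne_zero (pow_ne_zero 6 hdet) hdisc

namespace IsDiagonalPair

variable {u v w : V}

theorem det_contraction (h : T.IsDiagonalPair u v) (hT : T.IsSymm) (hu : T u u w = 0)
    (hv : T v v w = 0) (α β γ : R) :
    (Matrix.of fun i j => T (α • u + β • v + γ • w) (![u, v, w] i) (![u, v, w] j)).det =
      !![α * T u u u, γ * T u v w, β * T u v w + γ * T u w w;
         γ * T u v w, β * T v v v, α * T u v w + γ * T v w w;
         β * T u v w + γ * T u w w, α * T u v w + γ * T v w w,
          α * T u w w + β * T v w w + γ * T w w w].det := by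
  have huuv := h.apply_left_left_right
  have huvv := h.apply_left_right_right
  congr 1
  ext i j
  fin_cases i <;> fin_cases j <;>
    simp [hT.swap_left v u, hT.swap_left w u, hT.swap_left w v, hT.swap_right _ v u,
      hT.swap_right _ w u, hT.swap_right _ w v, huuv, huvv, hu, hv]

theorem apply_left_right_eq_zero [IsDomain R] (h : T.IsDiagonalPair u v) (hT : T.IsSymm)
    (hdeg : T.HasDegenerateContractions) (hu : T u u w = 0) (hv : T v v w = 0) :
    T u v w = 0 := by
  have hdet := h.det_contraction hT hu hv 1 0 0
  rw [hdeg, Matrix.det_fin_three] at hdet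
  simpa [h.left_ne_zero] using hdet

theorem apply_eq_zero [IsDomain R] [NeZero (2 : R)] (h : T.IsDiagonalPair u v) (hT : T.IsSymm)
    (hdeg : T.HasDegenerateContractions) (hu : T u u w = 0) (hv : T v v w = 0) :
    T u w w = 0 ∧ T v w w = 0 ∧ T w w w = 0 := by
  have huvw := h.apply_left_right_eq_zero hT hdeg hu hv
  have hprod : T u u u * T v v v ≠ 0 := mul_ne_zero h.left_ne_zero h.right_ne_zero
  have hdet (α β γ : R) :
      T u u u * T v v v * (α * β * (α * T u w w + β * T v w w + γ * T w w w)) =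
      γ ^ 2 * (α * T u u u * T v w w ^ 2 + β * T v v v * T u w w ^ 2) := by
    have hzero := h.det_contraction hT hu hv α β γ
    rw [hdeg, huvw, Matrix.det_fin_three] at hzero
    simp only [Matrix.of_apply, Matrix.cons_val, mul_zero, zero_add, zero_mul, add_zero] at hzero
    linear_combination -hzero
  have hsum : T u w w + T v w w = 0 := by simpa [hprod] using hdet 1 1 0
  have hdiff : T v w w + -T u w w = 0 := by simpa [hprod] using hdet 1 (-1) 0
  have huww : T u w w = 0 := by
    refine (mul_eq_zero.mp ?_).resolve_left (NeZero.ne (2 : R))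
    linear_combination hsum - hdiff
  have hvww : T v w w = 0 := by linear_combination hsum - huww
  exact ⟨huww, hvww, by simpa [huww, hvww, hprod] using hdet 1 1 1⟩

theorem apply_combination_add [IsDomain R] [NeZero (2 : R)] (h : T.IsDiagonalPair u v)
    (hT : T.IsSymm) (hdeg : T.HasDegenerateContractions) (hu : T u u w = 0) (hv : T v v w = 0)
    (s t : R) :
    T (s • u + t • v + w) (s • u + t • v + w) (s • u + t • v + w) =
      s ^ 3 * T u u u + t ^ 3 * T v v v := by
  have huuv := h.apply_left_left_right
  have huvv := h.apply_left_right_right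
  have huvw := h.apply_left_right_eq_zero hT hdeg hu hv
  obtain ⟨huww, hvww, hwww⟩ := h.apply_eq_zero hT hdeg hu hv
  simp only [map_add, map_smul, LinearMap.add_apply, LinearMap.smul_apply, smul_eq_mul,
    hT.swap_left v u, hT.swap_left w u, hT.swap_left w v, hT.swap_right _ v u,
    hT.swap_right _ w u, hT.swap_right _ w v, huuv, huvv, huvw, hu, hv, huww, hvww, hwww]
  ring

theorem apply_self [Field K] [NeZero (2 : K)] [Module K V] {T : TrilinearForm K V}
    (h : T.IsDiagonalPair u v) (hT : T.IsSymm) (hdeg : T.HasDegenerateContractions) (x : V) :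
    T x x x = T u u x ^ 3 / T u u u ^ 2 + T v v x ^ 3 / T v v v ^ 2 := by
  have huuu := h.left_ne_zero
  have hvvv := h.right_ne_zero
  have hvvu : T v v u = 0 := by rw [hT.swap_right, hT.swap_left, h.apply_left_right_right]
  set s := T u u x / T u u u with hs
  set t := T v v x / T v v v with ht
  have hu : T u u (x - (s • u + t • v)) = 0 := by
    simp [hs, h.apply_left_left_right, huuu]
  have hv : T v v (x - (s • u + t • v)) = 0 := by
    simp [ht, hvvu, hvvv]
  have hdiag := h.apply_combination_add hT hdeg hu hv s t
  rw [add_sub_cancel] at hdiag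
  rw [hdiag, hs, ht]
  field_simp

end IsDiagonalPair

end TrilinearForm

/-! ### Directional derivatives and polarization -/

section DirectionalDerivatives

variable {σ R : Type*} [CommRing R] [Fintype σ]

/-- The derivative in the constant direction `v`, as a linear function of `v`. -/
noncomputable def dirDeriv :
    (σ → R) →ₗ[R] Derivation R (MvPolynomial σ R) (MvPolynomial σ R) :=
  Fintype.linearCombination R pderiv

theorem dirDeriv_apply (v : σ → R) (f : MvPolynomial σ R) :
    dirDeriv v f = ∑ i, v i • pderiv i f := by
  rw [dirDeriv, Fintype.linearCombination_apply, ← Derivation.coeFnAddMonoidHom_apply, map_sum,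
    Finset.sum_apply]
  rfl

theorem dirDeriv_X (v : σ → R) (i : σ) : dirDeriv v (X i) = C (v i) := by
  classical
  simp [dirDeriv_apply, pderiv_X, Pi.single_apply, smul_eq_C_mul]

theorem dirDeriv_comm (u v : σ → R) (f : MvPolynomial σ R) :
    dirDeriv u (dirDeriv v f) = dirDeriv v (dirDeriv u f) := by
  have hbracket : ⁅dirDeriv u, dirDeriv v⁆ = 0 :=
    derivation_ext fun i => by simp [Derivation.commutator_apply, dirDeriv_X]
  simpa [Derivation.commutator_apply, sub_eq_zero] using DFunLike.congr_fun hbracket f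

theorem isHomogeneous_dirDeriv {f : MvPolynomial σ R} {n : ℕ} (hf : f.IsHomogeneous n)
    (v : σ → R) : (dirDeriv v f).IsHomogeneous (n - 1) := by
  rw [dirDeriv_apply]
  exact Submodule.sum_mem (homogeneousSubmodule σ R (n - 1)) fun i _ =>
    Submodule.smul_mem _ _ hf.pderiv

theorem eval_dirDeriv_self {f : MvPolynomial σ R} {n : ℕ} (hf : f.IsHomogeneous n) (x : σ → R) :
    eval x (dirDeriv x f) = n * eval x f := by
  simpa [dirDeriv_apply, smul_eval] using congrArg (eval x) hf.sum_X_mul_pderiv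

theorem dirDeriv_eq_C_eval {a : MvPolynomial σ R} (ha : a.IsHomogeneous 1) (x : σ → R) :
    dirDeriv x a = C (eval x a) := by
  have hconst := totalDegree_eq_zero_iff_eq_C.mp
    (Nat.le_zero.mp (isHomogeneous_dirDeriv ha x).totalDegree_le)
  have heuler := eval_dirDeriv_self ha x
  rw [hconst, eval_C, Nat.cast_one, one_mul] at heuler
  rw [hconst, heuler]

theorem eval_smul_add_smul {τ : Type*} [Finite τ] {a : MvPolynomial τ R} (ha : a.IsHomogeneous 1)
    (s t : R) (y z : τ → R) : eval (s • y + t • z) a = s * eval y a + t * eval z a := by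
  cases nonempty_fintype τ
  refine C_injective τ R ?_
  rw [← dirDeriv_eq_C_eval ha]
  simp [dirDeriv_eq_C_eval ha, smul_eq_C_mul]

/-- The matrix of second partial derivatives, whose determinant for ternary forms over `ℂ` is
`hessianDet`. -/
noncomputable def hessianMatrix (f : MvPolynomial σ R) : Matrix σ σ (MvPolynomial σ R) :=
  Matrix.of fun i j => pderiv i (pderiv j f)

theorem hessianMatrix_mulVec_C (f : MvPolynomial σ R) (w : σ → R) :
    (hessianMatrix f).mulVec (fun i => C (w i)) = fun i => pderiv i (dirDeriv w f) := by
  ext1 i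
  simp [hessianMatrix, Matrix.mulVec, dotProduct, dirDeriv_apply, smul_eq_C_mul, mul_comm]

theorem eval_dirDeriv_dirDeriv (f : MvPolynomial σ R) (x u v : σ → R) :
    eval x (dirDeriv u (dirDeriv v f)) =
      u ⬝ᵥ ((hessianMatrix f).map (eval x)).mulVec v := by
  simp [hessianMatrix, Matrix.mulVec, dotProduct, dirDeriv_apply u, dirDeriv_apply v, smul_eval,
    mul_comm]

theorem det_hessianMatrix_eq_zero [DecidableEq σ] [IsDomain R] {f : MvPolynomial σ R}
    {w : σ → R} (hw : w ≠ 0) (hf : dirDeriv w f = 0) : (hessianMatrix f).det = 0 := by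
  refine Matrix.exists_mulVec_eq_zero_iff.mp ⟨fun i => C (w i), ?_, ?_⟩
  · simpa [funext_iff] using hw
  · simp [hessianMatrix_mulVec_C, hf, ← Pi.zero_def]

theorem det_dirDeriv_eq_zero [DecidableEq σ] {f : MvPolynomial σ R}
    (hf : (hessianMatrix f).det = 0) (x : σ → R) (e : σ → σ → R) :
    (Matrix.of fun i j => eval x (dirDeriv (e i) (dirDeriv (e j) f))).det = 0 := by
  have hgram : (Matrix.of fun i j => eval x (dirDeriv (e i) (dirDeriv (e j) f))) =
      Matrix.of e * (hessianMatrix f).map (eval x) * (Matrix.of e).transpose := by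
    ext i j
    simp only [Matrix.of_apply, eval_dirDeriv_dirDeriv, Matrix.mul_assoc]
    rfl
  have heval : ((hessianMatrix f).map (eval x)).det = 0 := by
    simpa [hf] using ((eval x).map_det (hessianMatrix f)).symm
  rw [hgram, Matrix.det_mul, Matrix.det_mul, heval, mul_zero, zero_mul]

/-- The polarization of a cubic form, normalized so that `polarization f x x x = 6 * eval x f`. For
other polynomials only the homogeneous part of degree three matters. -/
noncomputable def polarization (f : MvPolynomial σ R) : TrilinearForm R (σ → R) :=
  LinearMap.mk₂ R
    (fun u v =>
      { toFun := fun w => constantCoeff (dirDeriv u (dirDeriv v (dirDeriv w f)))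
        map_add' := by simp
        map_smul' := by simp })
    (by intros; ext; simp) (by intros; ext; simp) (by intros; ext; simp) (by intros; ext; simp)

theorem polarization_apply (f : MvPolynomial σ R) (u v w : σ → R) :
    polarization f u v w = constantCoeff (dirDeriv u (dirDeriv v (dirDeriv w f))) := rfl

theorem polarization_eq_eval {f : MvPolynomial σ R} (hf : f.IsHomogeneous 3) (x u v : σ → R) :
    polarization f x u v = eval x (dirDeriv u (dirDeriv v f)) := by
  rw [polarization_apply,
    dirDeriv_eq_C_eval (isHomogeneous_dirDeriv (isHomogeneous_dirDeriv hf v) u), constantCoeff_C]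

theorem polarization_self {f : MvPolynomial σ R} (hf : f.IsHomogeneous 3) (x : σ → R) :
    polarization f x x x = 6 * eval x f := by
  rw [polarization_eq_eval hf, eval_dirDeriv_self (isHomogeneous_dirDeriv hf x),
    eval_dirDeriv_self hf]
  push_cast
  ring

theorem isSymm_polarization (f : MvPolynomial σ R) : (polarization f).IsSymm where
  swap_left u v w := by simp only [polarization_apply, dirDeriv_comm u v]
  swap_right u v w := by simp only [polarization_apply, dirDeriv_comm v w]

theorem hasDegenerateContractions_polarization {f : MvPolynomial (Fin 3) R}
    (hf : f.IsHomogeneous 3) (hdet : (hessianMatrix f).det = 0) :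
    (polarization f).HasDegenerateContractions := fun x e => by
  simpa only [polarization_eq_eval hf] using det_dirDeriv_eq_zero hdet x e

end DirectionalDerivatives

/-! ### Cubic forms that are combinations of two cubes -/

section LinearForms

variable {σ K ι : Type*} [Field K]

theorem exists_matrix_eval_eq_mulVec [Fintype σ] {a : ι → MvPolynomial σ K}
    (ha : ∀ i, (a i).IsHomogeneous 1) :
    ∃ M : Matrix ι σ K, (∀ i, a i = ∑ j, M i j • X j) ∧ ∀ x i, eval x (a i) = M.mulVec x i := by
  have hspan (i) : ∃ α : σ → K, ∑ j, α j • X j = a i := by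
    rw [← Submodule.mem_span_range_iff_exists_fun, ← homogeneousSubmodule_one_eq_span_X]
    exact ha i
  choose M hM using hspan
  refine ⟨M, fun i => (hM i).symm, fun x i => ?_⟩
  simp [← hM, Matrix.mulVec, dotProduct, smul_eval]

theorem exists_eval_eq_of_linearIndependent [Finite σ] [Finite ι] {a : ι → MvPolynomial σ K}
    (ha : ∀ i, (a i).IsHomogeneous 1) (hli : LinearIndependent K a) (c : ι → K) :
    ∃ x : σ → K, ∀ i, eval x (a i) = c i := by
  cases nonempty_fintype σ
  cases nonempty_fintype ι
  obtain ⟨M, hM, hMeval⟩ := exists_matrix_eval_eq_mulVec ha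
  have hrow : LinearIndependent K M.row := by
    refine LinearIndependent.of_comp (Fintype.linearCombination K (X : σ → MvPolynomial σ K)) ?_
    convert hli using 1
    ext1 i
    exact (Fintype.linearCombination_apply K X (M i)).trans (hM i).symm
  have hrange : LinearMap.range M.mulVecLin = ⊤ :=
    Submodule.eq_top_of_finrank_eq (by simpa [Matrix.rank] using hrow.rank_matrix)
  obtain ⟨x, hx⟩ := LinearMap.range_eq_top.mp hrange c
  exact ⟨x, fun i => by simp [hMeval, ← hx]⟩

theorem exists_ne_zero_eval_eq_zero [Fintype σ] [Fintype ι]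
    (hcard : Fintype.card ι < Fintype.card σ) {a : ι → MvPolynomial σ K}
    (ha : ∀ i, (a i).IsHomogeneous 1) :
    ∃ x : σ → K, x ≠ 0 ∧ ∀ i, eval x (a i) = 0 := by
  obtain ⟨M, -, hMeval⟩ := exists_matrix_eval_eq_mulVec ha
  obtain ⟨x, hx, hx₀⟩ := Submodule.exists_mem_ne_zero_of_ne_bot
    (LinearMap.ker_ne_bot_of_finrank_lt (f := M.mulVecLin) (by simpa using hcard))
  exact ⟨x, hx₀, fun i => by rw [hMeval]; exact congrFun hx i⟩

end LinearForms

section TwoCubes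

variable {σ K : Type*} [Field K] [Fintype σ]

theorem linearIndependent_of_isDiagonalPair {f : MvPolynomial σ K} (hf : f.IsHomogeneous 3)
    {u v : σ → K} (h : (polarization f).IsDiagonalPair u v) :
    LinearIndependent K ![dirDeriv u (dirDeriv u f), dirDeriv v (dirDeriv v f)] := by
  have hvuu : polarization f v u u = 0 := by
    rw [(isSymm_polarization f).swap_left, (isSymm_polarization f).swap_right,
      h.apply_left_left_right]
  refine LinearIndependent.pair_iff.mpr fun s t hst => ⟨?_, ?_⟩
  · have hu := congrArg (eval u) hst
    simpa [smul_eval, ← polarization_eq_eval hf, h.apply_left_right_right, h.left_ne_zero] using hu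
  · have hv := congrArg (eval v) hst
    simpa [smul_eval, ← polarization_eq_eval hf, hvuu, h.right_ne_zero] using hv

theorem eq_smul_cube_add_smul_cube_of_isDiagonalPair [CharZero K] {f : MvPolynomial σ K}
    (hf : f.IsHomogeneous 3) (hdeg : (polarization f).HasDegenerateContractions) {u v : σ → K}
    (h : (polarization f).IsDiagonalPair u v) :
    f = (6 * polarization f u u u ^ 2)⁻¹ • dirDeriv u (dirDeriv u f) ^ 3 +
      (6 * polarization f v v v ^ 2)⁻¹ • dirDeriv v (dirDeriv v f) ^ 3 := by
  have hsymm := isSymm_polarization f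
  have heval (w x : σ → K) : eval x (dirDeriv w (dirDeriv w f)) = polarization f w w x := by
    rw [← polarization_eq_eval hf, hsymm.swap_left, hsymm.swap_right]
  refine MvPolynomial.funext fun x => ?_
  have hx := h.apply_self hsymm hdeg x
  rw [polarization_self hf] at hx
  simp only [map_add, smul_eval, map_pow, heval, mul_inv]
  linear_combination 6⁻¹ * hx

theorem exists_eq_smul_cube_add_smul_cube [IsAlgClosed K] [CharZero K]
    {f : MvPolynomial (Fin 3) K} (hf : f.IsHomogeneous 3) (hdet : (hessianMatrix f).det = 0)
    {y z : Fin 3 → K} (hdisc : (polarization f).hessianDiscrim y z ≠ 0) :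
    ∃ (a₀ b₀ : K) (a b : MvPolynomial (Fin 3) K), a₀ ≠ 0 ∧ b₀ ≠ 0 ∧ a.IsHomogeneous 1 ∧
      b.IsHomogeneous 1 ∧ LinearIndependent K ![a, b] ∧ f = a₀ • a ^ 3 + b₀ • b ^ 3 := by
  obtain ⟨u, v, huv⟩ := (isSymm_polarization f).exists_isDiagonalPair hdisc
  have hdeg := hasDegenerateContractions_polarization hf hdet
  have hlin (w : Fin 3 → K) : (dirDeriv w (dirDeriv w f)).IsHomogeneous 1 :=
    isHomogeneous_dirDeriv (isHomogeneous_dirDeriv hf w) w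
  exact ⟨_, _, _, _, by simp [huv.left_ne_zero], by simp [huv.right_ne_zero], hlin u, hlin v,
    linearIndependent_of_isDiagonalPair hf huv,
    eq_smul_cube_add_smul_cube_of_isDiagonalPair hf hdeg huv⟩

theorem det_hessianMatrix_smul_cube_add_smul_cube [DecidableEq σ] (hσ : 2 < Fintype.card σ)
    (a₀ b₀ : K) {a b : MvPolynomial σ K} (ha : a.IsHomogeneous 1) (hb : b.IsHomogeneous 1) :
    (hessianMatrix (a₀ • a ^ 3 + b₀ • b ^ 3)).det = 0 := by
  obtain ⟨w, hw, hzero⟩ := exists_ne_zero_eval_eq_zero (ι := Fin 2) (a := ![a, b])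
    (by simpa using hσ) (Fin.forall_fin_two.mpr ⟨ha, hb⟩)
  have hwa : eval w a = 0 := hzero 0
  have hwb : eval w b = 0 := hzero 1
  refine det_hessianMatrix_eq_zero hw ?_
  simp [Derivation.leibniz_pow, dirDeriv_eq_C_eval ha, dirDeriv_eq_C_eval hb, hwa, hwb]

end TwoCubes

section LineRestriction

theorem eval_lineRestrict (f : MvPolynomial (Fin 3) ℂ) (y z : Fin 3 → ℂ) (x : Fin 2 → ℂ) :
    eval x (lineRestrict f y z) = eval (x 0 • y + x 1 • z) f := by
  have hpoint : x 0 • y + x 1 • z = fun i => eval x (C (y i) * X 0 + C (z i) * X 1) := by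
    ext i
    simp [mul_comm]
  rw [hpoint]
  exact eval₂Hom_bind₁ (RingHom.id ℂ) x _ f

theorem binCubicDisc_eq_of_forall_eval {p : MvPolynomial (Fin 2) ℂ} {c₃ c₂ c₁ c₀ : ℂ}
    (hp : ∀ x : Fin 2 → ℂ, eval x p =
      c₃ * x 0 ^ 3 + c₂ * x 0 ^ 2 * x 1 + c₁ * x 0 * x 1 ^ 2 + c₀ * x 1 ^ 3) :
    binCubicDisc p = c₂ ^ 2 * c₁ ^ 2 - 4 * c₃ * c₁ ^ 3 - 4 * c₂ ^ 3 * c₀ +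
      18 * c₃ * c₂ * c₁ * c₀ - 27 * c₃ ^ 2 * c₀ ^ 2 := by
  have hmonomials : p = monomial (Finsupp.single 0 3) c₃ +
      monomial (Finsupp.single 0 2 + Finsupp.single 1 1) c₂ +
      monomial (Finsupp.single 0 1 + Finsupp.single 1 2) c₁ +
      monomial (Finsupp.single 1 3) c₀ := by
    refine MvPolynomial.funext fun x => ?_
    simp [hp, eval_monomial, Finsupp.prod_fintype, Fin.prod_univ_two, mul_assoc]
  simp [binCubicDisc, hmonomials, coeff_monomial, Finsupp.ext_iff, Fin.forall_fin_two]

theorem binCubicDisc_lineRestrict {f : MvPolynomial (Fin 3) ℂ} (hf : f.IsHomogeneous 3)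
    (y z : Fin 3 → ℂ) :
    binCubicDisc (lineRestrict f y z) = -(1 / 48) * (polarization f).hessianDiscrim y z := by
  set T := polarization f
  have hcoeffs (x : Fin 2 → ℂ) : eval x (lineRestrict f y z) =
      T y y y / 6 * x 0 ^ 3 + T y y z / 2 * x 0 ^ 2 * x 1 + T y z z / 2 * x 0 * x 1 ^ 2 +
        T z z z / 6 * x 1 ^ 3 := by
    have hself := polarization_self hf (x 0 • y + x 1 • z)
    rw [(isSymm_polarization f).apply_combination] at hself
    rw [eval_lineRestrict]
    linear_combination -hself / 6
  rw [binCubicDisc_eq_of_forall_eval hcoeffs, TrilinearForm.hessianDiscrim, discrim]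
  ring

theorem exists_binCubicDisc_smul_cube_add_smul_cube_ne_zero {a₀ b₀ : ℂ} (ha₀ : a₀ ≠ 0)
    (hb₀ : b₀ ≠ 0) {a b : MvPolynomial (Fin 3) ℂ} (ha : a.IsHomogeneous 1)
    (hb : b.IsHomogeneous 1) (hab : LinearIndependent ℂ ![a, b]) :
    ∃ y z, binCubicDisc (lineRestrict (a₀ • a ^ 3 + b₀ • b ^ 3) y z) ≠ 0 := by
  have hdual := exists_eval_eq_of_linearIndependent (Fin.forall_fin_two.mpr ⟨ha, hb⟩) hab
  obtain ⟨y, hy⟩ := hdual ![1, 0]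
  obtain ⟨z, hz⟩ := hdual ![0, 1]
  obtain ⟨hya, hyb⟩ : eval y a = 1 ∧ eval y b = 0 := ⟨hy 0, hy 1⟩
  obtain ⟨hza, hzb⟩ : eval z a = 0 ∧ eval z b = 1 := ⟨hz 0, hz 1⟩
  refine ⟨y, z, ?_⟩
  have hcoeffs (x : Fin 2 → ℂ) : eval x (lineRestrict (a₀ • a ^ 3 + b₀ • b ^ 3) y z) =
      a₀ * x 0 ^ 3 + 0 * x 0 ^ 2 * x 1 + 0 * x 0 * x 1 ^ 2 + b₀ * x 1 ^ 3 := by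
    simp [eval_lineRestrict, smul_eval, eval_smul_add_smul ha, eval_smul_add_smul hb, hya, hyb,
      hza, hzb]
  rw [binCubicDisc_eq_of_forall_eval hcoeffs]
  simp [ha₀, hb₀]

end LineRestriction

theorem isLinearForm_of_mem_span_pair {a b c : MvPolynomial (Fin 3) ℂ} (ha : IsLinearForm a)
    (hb : IsLinearForm b) (hc : c ∈ Submodule.span ℂ {a, b}) : IsLinearForm c :=
  have hle : Submodule.span ℂ {a, b} ≤ homogeneousSubmodule (Fin 3) ℂ 1 :=
    Submodule.span_le.mpr (Set.pair_subset ha hb)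
  hle hc

theorem stmt8 (f : MvPolynomial (Fin 3) ℂ) (hf : f.IsHomogeneous 3) :
    [hessianDet f = 0 ∧ ∃ y z : Fin 3 → ℂ, binCubicDisc (lineRestrict f y z) ≠ 0,
     ∃ a₀ b₀ : ℂ, ∃ a b : MvPolynomial (Fin 3) ℂ, a₀ ≠ 0 ∧ b₀ ≠ 0 ∧
       IsLinearForm a ∧ IsLinearForm b ∧ LinearIndependent ℂ ![a, b] ∧
       f = C a₀ * a ^ 3 + C b₀ * b ^ 3,
     ∃ a b c : MvPolynomial (Fin 3) ℂ, IsLinearForm a ∧ IsLinearForm b ∧ IsLinearForm c ∧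
       ¬ LinearIndependent ℂ ![a, b, c] ∧
       LinearIndependent ℂ ![a, b] ∧ LinearIndependent ℂ ![a, c] ∧
       LinearIndependent ℂ ![b, c] ∧ f = a * b * c].TFAE := by
  simp only [← smul_eq_C_mul]
  tfae_have 1 → 2 := by
    rintro ⟨hdet, y, z, hdisc⟩
    rw [binCubicDisc_lineRestrict hf] at hdisc
    exact exists_eq_smul_cube_add_smul_cube hf hdet (right_ne_zero_of_mul hdisc)
  tfae_have 2 → 1 := by
    rintro ⟨a₀, b₀, a, b, ha₀, hb₀, ha, hb, hab, rfl⟩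
    exact ⟨det_hessianMatrix_smul_cube_add_smul_cube (by simp) a₀ b₀ ha hb,
      exists_binCubicDisc_smul_cube_add_smul_cube_ne_zero ha₀ hb₀ ha hb hab⟩
  tfae_have 2 → 3 := by
    rintro ⟨a₀, b₀, a, b, ha₀, hb₀, ha, hb, hab, rfl⟩
    obtain ⟨c, hspan, hpair, hprod⟩ := exists_mul_eq_smul_cube_add_smul_cube hab ha₀ hb₀
    have hlin (i) : IsLinearForm (c i) := isLinearForm_of_mem_span_pair ha hb (hspan i)
    have hdep : ¬ LinearIndependent ℂ ![c 0, c 1, c 2] :=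
      not_linearIndependent_of_mem_span_pair (by simpa [Fin.forall_fin_succ] using hspan)
    exact ⟨c 0, c 1, c 2, hlin 0, hlin 1, hlin 2, hdep, hpair (by decide), hpair (by decide),
      hpair (by decide), hprod.symm⟩
  tfae_have 3 → 2 := by
    rintro ⟨a, b, c, ha, hb, -, habc, hab, hac, hbc, rfl⟩
    obtain ⟨a₀, b₀, u, hu, v, hv, ha₀, hb₀, huv, hsum⟩ :=
      exists_smul_cube_add_smul_cube_eq_mul habc hab hac hbc
    exact ⟨a₀, b₀, u, v, ha₀, hb₀, isLinearForm_of_mem_span_pair ha hb hu,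
      isLinearForm_of_mem_span_pair ha hb hv, huv, hsum.symm⟩
  tfae_finish
end

section
/- Let f be a ternary cubic form over ℂ and let D = det(∂ᵢ∂ⱼ f) be its Hessian determinant. Then f is completely reducible if and only if there exists s ∈ ℂ such that D² = s·f² (as polynomials). -/
open MvPolynomial

/-- A cubic form is completely reducible if it is a product of three linear forms. -/
def CompletelyReducible (f : MvPolynomial (Fin 3) ℂ) : Prop :=
  ∃ a b c : MvPolynomial (Fin 3) ℂ,
    IsLinearForm a ∧ IsLinearForm b ∧ IsLinearForm c ∧ f = a * b * c

/-!
Up to sign there is only one square root of `s f²`, so the condition says that the Hessian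
determinant `D` of `f` is a scalar multiple of `f`.

For a linear form `ℓ` and a quadratic form `q` one has `det Hess(ℓq) = 4 det(Hess q) ℓ³ - c ℓq`
with `c` a constant. If `q` is itself a product of linear forms, then `Hess q` is degenerate and
`D` is a multiple of `f = ℓq`. Conversely, if `D` is a multiple of `ℓq`, then either `Hess q` is
degenerate, or `q` is proportional to `ℓ²`.

It remains to split off a linear factor of `f` when `D = k f` (or of `q` when `Hess q` is
degenerate). If `f` has a multiple factor, one of its irreducible factors is linear by degree.
Otherwise the Nullstellensatz provides a zero `p` of `f` with nonzero gradient. Since `D(p) = 0`,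
there is a nonzero `v` with `Hess f(p) v = 0`; by Euler's identity `v` is not proportional to `p`.
On the line `p + t v` the cubic `f` equals `t³ f(v)`, whereas `D` is, up to a nonzero factor,
`t f(v)`; so `D = k f` forces `f(v) = 0`. Hence `f` vanishes on the plane spanned by `p` and `v`,
and by the Nullstellensatz the linear form `x ↦ det(x, p, v)` divides `f`.
-/

namespace TernaryCubic

open scoped Matrix

section HomogeneousFactors

variable {σ R : Type*}

lemma homogeneousComponent_add_mul [CommSemiring R] {p q : MvPolynomial σ R} {m n : ℕ}
    (hp : p.totalDegree ≤ m) (hq : q.totalDegree ≤ n) :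
    homogeneousComponent (m + n) (p * q) =
      homogeneousComponent m p * homogeneousComponent n q := by
  classical
  have coeff_eq_zero {g : MvPolynomial σ R} {e : ℕ} (hg : g.totalDegree ≤ e) (d : σ →₀ ℕ)
      (hd : e < d.degree) : coeff d g = 0 :=
    coeff_eq_zero_of_totalDegree_lt (hg.trans_lt hd)
  ext d
  calc
    _ = ∑ ab ∈ Finset.HasAntidiagonal.antidiagonal d,
          if d.degree = m + n then coeff ab.1 p * coeff ab.2 q else 0 := by
      rw [coeff_homogeneousComponent, coeff_mul, Finset.sum_ite_irrel, Finset.sum_const_zero]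
    _ = coeff d (homogeneousComponent m p * homogeneousComponent n q) := by
      rw [coeff_mul]
      refine Finset.sum_congr rfl fun ⟨a, b⟩ hab ↦ ?_
      obtain rfl : a + b = d := Finset.HasAntidiagonal.mem_antidiagonal.1 hab
      rw [map_add, coeff_homogeneousComponent, coeff_homogeneousComponent]
      rcases lt_trichotomy a.degree m with ha | ha | ha
      · rw [if_neg ha.ne, zero_mul, ite_eq_right_iff]
        intro hdeg
        rw [coeff_eq_zero hq b (by omega), mul_zero]
      · simp [ha]
      · simp [coeff_eq_zero hp a ha]

variable [CommRing R] [IsDomain R]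

lemma exists_isHomogeneous_mul_of_dvd {f g : MvPolynomial σ R} {n : ℕ} (hf : f.IsHomogeneous n)
    (hf0 : f ≠ 0) (hgf : g ∣ f) :
    ∃ a b : MvPolynomial σ R, a.IsHomogeneous g.totalDegree ∧
      b.IsHomogeneous (n - g.totalDegree) ∧ f = a * b := by
  obtain ⟨h, rfl⟩ := hgf
  have hdeg : g.totalDegree + h.totalDegree = n := by
    rw [← totalDegree_mul_of_isDomain (left_ne_zero_of_mul hf0) (right_ne_zero_of_mul hf0),
      hf.totalDegree hf0]
  refine ⟨homogeneousComponent g.totalDegree g, homogeneousComponent h.totalDegree h,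
    homogeneousComponent_isHomogeneous _ _, ?_, ?_⟩
  · rw [← hdeg, Nat.add_sub_cancel_left]
    exact homogeneousComponent_isHomogeneous _ _
  · rw [← homogeneousComponent_add_mul le_rfl le_rfl, hdeg, homogeneousComponent_eq_self hf]

end HomogeneousFactors

section Hessian

variable {σ R : Type*} [CommRing R]

lemma pderiv_comm (i j : σ) (f : MvPolynomial σ R) :
    pderiv i (pderiv j f) = pderiv j (pderiv i f) := by
  classical
  have hbracket : ⁅pderiv (R := R) (σ := σ) i, pderiv (R := R) (σ := σ) j⁆ = 0 := by
    refine derivation_ext fun k ↦ ?_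
    simp [Derivation.commutator_apply, pderiv_X, Pi.single_apply, apply_ite]
  have h := DFunLike.congr_fun hbracket f
  rwa [Derivation.commutator_apply, Derivation.coe_zero, Pi.zero_apply, sub_eq_zero] at h

lemma exists_eq_C_of_isHomogeneous_zero {f : MvPolynomial σ R} (hf : f.IsHomogeneous 0) :
    ∃ c, f = C c :=
  ⟨_, totalDegree_eq_zero_iff_eq_C.1 ((totalDegree_zero_iff_isHomogeneous σ).2 hf)⟩

/-- The Hessian matrix `(∂ᵢ∂ⱼ f)` as a matrix of polynomials. -/
noncomputable def hessian (f : MvPolynomial σ R) : Matrix σ σ (MvPolynomial σ R) :=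
  Matrix.of fun i j ↦ pderiv i (pderiv j f)

/-- The Hessian matrix of `f` evaluated at a point. -/
noncomputable def hessianAt (f : MvPolynomial σ R) (x : σ → R) : Matrix σ σ R :=
  (hessian f).map (eval x)

/-- The gradient of `f` evaluated at a point. -/
noncomputable def gradientAt (f : MvPolynomial σ R) (x : σ → R) : σ → R :=
  fun i ↦ eval x (pderiv i f)

variable {f : MvPolynomial σ R}

lemma isSymm_hessian (f : MvPolynomial σ R) : (hessian f).IsSymm :=
  Matrix.IsSymm.ext fun i j ↦ pderiv_comm j i f

lemma isSymm_hessianAt (f : MvPolynomial σ R) (x : σ → R) : (hessianAt f x).IsSymm :=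
  (isSymm_hessian f).map _

lemma det_hessianAt [Fintype σ] [DecidableEq σ] (f : MvPolynomial σ R) (x : σ → R) :
    (hessianAt f x).det = eval x (hessian f).det :=
  (RingHom.map_det _ _).symm

lemma exists_hessian_eq_map_C (hf : f.IsHomogeneous 2) :
    ∃ A : Matrix σ σ R, hessian f = A.map C := by
  have hconst (i j : σ) : ∃ c, pderiv i (pderiv j f) = C c :=
    exists_eq_C_of_isHomogeneous_zero hf.pderiv.pderiv
  choose A hA using hconst
  exact ⟨Matrix.of A, Matrix.ext hA⟩

lemma hessianAt_eq_of_isHomogeneous_two (hf : f.IsHomogeneous 2) (x y : σ → R) :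
    hessianAt f x = hessianAt f y := by
  obtain ⟨A, hA⟩ := exists_hessian_eq_map_C hf
  ext i j
  simp [hessianAt, hA]

variable [Fintype σ]

lemma dotProduct_hessianAt_mulVec_comm (f : MvPolynomial σ R) (x y z : σ → R) :
    y ⬝ᵥ hessianAt f x *ᵥ z = z ⬝ᵥ hessianAt f x *ᵥ y := by
  rw [Matrix.dotProduct_mulVec, ← Matrix.mulVec_transpose, isSymm_hessianAt, dotProduct_comm]

lemma dotProduct_hessianAt_mulVec_eq_zero {x v : σ → R} (hv : hessianAt f x *ᵥ v = 0)
    (y : σ → R) : v ⬝ᵥ hessianAt f x *ᵥ y = 0 := by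
  rw [dotProduct_hessianAt_mulVec_comm, hv, dotProduct_zero]

lemma hessianAt_mulVec_apply (f : MvPolynomial σ R) (x y : σ → R) (i : σ) :
    (hessianAt f x *ᵥ y) i = gradientAt (pderiv i f) x ⬝ᵥ y := by
  simp only [Matrix.mulVec, hessianAt, hessian, gradientAt, dotProduct, Matrix.map_apply,
    Matrix.of_apply, pderiv_comm i]

lemma gradientAt_dotProduct_self {n : ℕ} (hf : f.IsHomogeneous n) (x : σ → R) :
    gradientAt f x ⬝ᵥ x = n * eval x f := by
  have heuler := congrArg (eval x) hf.sum_X_mul_pderiv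
  simpa [gradientAt, dotProduct, mul_comm] using heuler

lemma hessianAt_mulVec_self {n : ℕ} (hf : f.IsHomogeneous n) (x : σ → R) :
    hessianAt f x *ᵥ x = ((n - 1 : ℕ) : R) • gradientAt f x := by
  ext i
  rw [hessianAt_mulVec_apply, gradientAt_dotProduct_self hf.pderiv]
  rfl

lemma dotProduct_hessianAt_mulVec_self {n : ℕ} (hf : f.IsHomogeneous n) (x : σ → R) :
    x ⬝ᵥ hessianAt f x *ᵥ x = ((n - 1 : ℕ) : R) * (n * eval x f) := by
  rw [hessianAt_mulVec_self hf, dotProduct_smul, dotProduct_comm, gradientAt_dotProduct_self hf,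
    smul_eq_mul]

lemma hessianAt_mulVec_comm (hf : f.IsHomogeneous 3) (x y : σ → R) :
    hessianAt f x *ᵥ y = hessianAt f y *ᵥ x := by
  ext i
  have hgrad (z : σ → R) : gradientAt (pderiv i f) z = hessianAt (pderiv i f) 0 *ᵥ z := by
    rw [hessianAt_eq_of_isHomogeneous_two hf.pderiv 0 z, hessianAt_mulVec_self hf.pderiv]
    simp
  rw [hessianAt_mulVec_apply, hessianAt_mulVec_apply, hgrad, hgrad, dotProduct_comm,
    dotProduct_hessianAt_mulVec_comm, dotProduct_comm]

lemma hessianAt_smul_add_smul_mulVec (hf : f.IsHomogeneous 3) (s t : R) (x y z : σ → R) :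
    hessianAt f (s • x + t • y) *ᵥ z = s • hessianAt f x *ᵥ z + t • hessianAt f y *ᵥ z := by
  rw [hessianAt_mulVec_comm hf, Matrix.mulVec_add, Matrix.mulVec_smul, Matrix.mulVec_smul,
    hessianAt_mulVec_comm hf z x, hessianAt_mulVec_comm hf z y]

end Hessian

section Nullstellensatz

variable {σ K : Type*} [Field K]

lemma irreducible_of_totalDegree_eq_one_of_field {g : MvPolynomial σ K} (hg : g.totalDegree = 1) :
    Irreducible g := by
  refine irreducible_of_totalDegree_eq_one hg fun c hc ↦ ?_
  refine isUnit_iff_ne_zero.2 fun hc0 ↦ ?_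
  have hg0 : g = 0 := by
    ext d
    simpa [hc0] using hc d
  simp [hg0] at hg

lemma totalDegree_pos_of_not_isUnit {g : MvPolynomial σ K} (hg0 : g ≠ 0) (hg : ¬ IsUnit g) :
    0 < g.totalDegree := by
  rw [Nat.pos_iff_ne_zero]
  intro hdeg
  rw [totalDegree_eq_zero_iff_eq_C] at hdeg
  rw [hdeg] at hg hg0
  exact hg ((isUnit_iff_ne_zero.2 fun h ↦ hg0 (by rw [h, C_0])).map C)

lemma exists_dvd_totalDegree_eq_one_of_not_squarefree {f : MvPolynomial σ K} (hf0 : f ≠ 0)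
    (hdeg : f.totalDegree ≤ 3) (hf : ¬ Squarefree f) : ∃ g, g.totalDegree = 1 ∧ g ∣ f := by
  simp only [Squarefree, not_forall] at hf
  obtain ⟨g, hgf, hg⟩ := hf
  have hg0 : g ≠ 0 := by
    rintro rfl
    exact hf0 (by simpa using hgf)
  have hpos := totalDegree_pos_of_not_isUnit hg0 hg
  have hle := totalDegree_le_of_dvd_of_isDomain hgf hf0
  rw [totalDegree_mul_of_isDomain hg0 hg0] at hle
  exact ⟨g, by omega, (dvd_mul_right g g).trans hgf⟩

variable [IsAlgClosed K]

lemma dvd_of_forall_eval_eq_zero [Finite σ] {f g : MvPolynomial σ K} (hg : IsRadical g)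
    (h : ∀ x, eval x g = 0 → eval x f = 0) : g ∣ f := by
  have hf : f ∈ vanishingIdeal K (zeroLocus K (Ideal.span {g})) := by
    simpa [zeroLocus_span, aeval_eq_eval] using h
  rwa [vanishingIdeal_zeroLocus_eq_radical, (isRadical_iff_span_singleton.1 hg).radical,
    Ideal.mem_span_singleton] at hf

/-- Otherwise every partial derivative vanishes on the zero set of `f`, hence is divisible by
`f`, hence is zero for degree reasons; this contradicts Euler's identity. -/
lemma exists_smooth_zero_of_squarefree [Finite σ] {f : MvPolynomial σ K} {n : ℕ}
    (hf : f.IsHomogeneous n) (hn : (n : K) ≠ 0) (hsq : Squarefree f) :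
    ∃ x, eval x f = 0 ∧ gradientAt f x ≠ 0 := by
  cases nonempty_fintype σ
  by_contra! h
  have hf0 : f ≠ 0 := hsq.ne_zero
  have hn0 : n ≠ 0 := by
    rintro rfl
    exact hn Nat.cast_zero
  have hpderiv (i : σ) : pderiv i f = 0 := by
    by_contra hne
    have hdvd : f ∣ pderiv i f :=
      dvd_of_forall_eval_eq_zero hsq.isRadical fun x hx ↦ congrFun (h x hx) i
    have hle := totalDegree_le_of_dvd_of_isDomain hdvd hne
    rw [hf.totalDegree hf0, hf.pderiv.totalDegree hne] at hle
    omega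
  have heuler := hf.sum_X_mul_pderiv
  simp only [hpderiv, mul_zero, Finset.sum_const_zero, ← Nat.cast_smul_eq_nsmul K] at heuler
  exact hf0 ((smul_eq_zero.1 heuler.symm).resolve_left hn)

lemma exists_dvd_totalDegree_eq_one_of_eval_span_eq_zero {f : MvPolynomial (Fin 3) K}
    {p v : Fin 3 → K} (hpv : LinearIndependent K ![p, v])
    (h : ∀ s t : K, eval (s • p + t • v) f = 0) :
    ∃ g, g.totalDegree = 1 ∧ g ∣ f := by
  let g : MvPolynomial (Fin 3) K := ∑ i, C ((p ⨯₃ v) i) * X i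
  have eval_g (x : Fin 3 → K) : eval x g = Matrix.det ![x, p, v] := by
    rw [← triple_product_eq_det]
    simp [g, dotProduct, mul_comm]
  have hg0 : g ≠ 0 := by
    obtain ⟨i, hi⟩ := Function.ne_iff.1 (crossProduct_ne_zero_iff_linearIndependent.2 hpv)
    intro h0
    have hgi : eval (Pi.single i 1) g = (p ⨯₃ v) i := by simp [g, Pi.single_apply]
    exact hi (by rw [← hgi, h0, map_zero, Pi.zero_apply])
  have hg1 : g.totalDegree = 1 :=
    (IsHomogeneous.sum _ _ _ fun i _ ↦ isHomogeneous_C_mul_X _ i).totalDegree hg0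
  have hprime : Prime g := (irreducible_of_totalDegree_eq_one_of_field hg1).prime
  refine ⟨g, hg1, dvd_of_forall_eval_eq_zero hprime.isRadical fun x hx ↦ ?_⟩
  have hmem : x ∈ Submodule.span K {p, v} := by
    by_contra hx'
    have hli : LinearIndependent K ![x, p, v] :=
      linearIndependent_finCons.2 ⟨hpv, by simpa [Set.pair_comm] using hx'⟩
    have hunit := Matrix.linearIndependent_rows_iff_isUnit.1 hli
    exact ((Matrix.isUnit_iff_isUnit_det _).1 hunit).ne_zero ((eval_g x).symm.trans hx)
  obtain ⟨s, t, rfl⟩ := Submodule.mem_span_pair.1 hmem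
  exact h s t

end Nullstellensatz

section Identities

variable {R : Type*} [CommRing R]

lemma det_dotProduct_mulVec {n : Type*} [Fintype n] [DecidableEq n] (M : Matrix n n R)
    (v : n → n → R) :
    (Matrix.of fun i j ↦ v i ⬝ᵥ M *ᵥ v j).det = (Matrix.of v).det ^ 2 * M.det := by
  have hgram : (Matrix.of fun i j ↦ v i ⬝ᵥ M *ᵥ v j) = Matrix.of v * (M * (Matrix.of v)ᵀ) := by
    ext i j
    rfl
  rw [hgram, Matrix.det_mul, Matrix.det_mul, Matrix.det_transpose]
  ring

/-- The matrix on the left is the Hessian of `x ↦ (u ⬝ᵥ x) * (x ⬝ᵥ A *ᵥ x) / 2`. -/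
lemma det_smul_add_vecMulVec_add_vecMulVec {A : Matrix (Fin 3) (Fin 3) R} (hA : A.IsSymm)
    (u x : Fin 3 → R) :
    ((u ⬝ᵥ x) • A + Matrix.vecMulVec u (A *ᵥ x) + Matrix.vecMulVec (A *ᵥ x) u).det =
      4 * A.det * (u ⬝ᵥ x) ^ 3 - (u ⬝ᵥ A.adjugate *ᵥ u) * (u ⬝ᵥ x) * (x ⬝ᵥ A *ᵥ x) := by
  simp only [Matrix.det_fin_three, Matrix.adjugate_fin_three, Matrix.add_apply, Matrix.smul_apply,
    Matrix.vecMulVec_apply, Matrix.mulVec, dotProduct, Fin.sum_univ_three, smul_eq_mul,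
    Matrix.of_apply, Matrix.cons_val, hA.apply 0 1, hA.apply 0 2, hA.apply 1 2]
  ring

lemma det_vecMulVec_add_vecMulVec_eq_zero (u w : Fin 3 → R) :
    (Matrix.vecMulVec u w + Matrix.vecMulVec w u).det = 0 := by
  simp only [Matrix.det_fin_three, Matrix.add_apply, Matrix.vecMulVec_apply]
  ring

lemma exists_pderiv_eq_C {σ : Type*} {a : MvPolynomial σ R} (ha : a.IsHomogeneous 1) :
    ∃ u : σ → R, ∀ i, pderiv i a = C (u i) :=
  Classical.skolem.1 fun _ ↦ exists_eq_C_of_isHomogeneous_zero ha.pderiv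

lemma det_hessian_mul_eq_zero {a b : MvPolynomial (Fin 3) R} (ha : a.IsHomogeneous 1)
    (hb : b.IsHomogeneous 1) : (hessian (a * b)).det = 0 := by
  obtain ⟨u, hu⟩ := exists_pderiv_eq_C ha
  obtain ⟨w, hw⟩ := exists_pderiv_eq_C hb
  rw [← det_vecMulVec_add_vecMulVec_eq_zero (C ∘ u) (C ∘ w)]
  congr 1
  ext1 i j
  simp only [hessian, Matrix.of_apply, pderiv_mul, hu, hw, map_add, pderiv_C, Matrix.add_apply,
    Matrix.vecMulVec_apply, Function.comp_apply]
  ring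

lemma exists_det_hessian_linear_mul_quadratic {a q : MvPolynomial (Fin 3) R}
    (ha : a.IsHomogeneous 1) (hq : q.IsHomogeneous 2) :
    ∃ c : R, (hessian (a * q)).det = 4 * (hessian q).det * a ^ 3 - C c * (a * q) := by
  obtain ⟨u, hu⟩ := exists_pderiv_eq_C ha
  obtain ⟨A, hA⟩ := exists_hessian_eq_map_C hq
  have ha_eq : (C ∘ u) ⬝ᵥ X = a := by
    simpa [dotProduct, hu, mul_comm] using ha.sum_X_mul_pderiv
  have hgrad : hessian q *ᵥ X = fun i ↦ pderiv i q := by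
    ext1 i
    have heuler := (hq.pderiv (i := i)).sum_X_mul_pderiv
    simpa [Matrix.mulVec, dotProduct, hessian, pderiv_comm i, mul_comm] using heuler
  have hq_eq : X ⬝ᵥ hessian q *ᵥ X = 2 * q := by
    rw [hgrad]
    simpa [dotProduct] using hq.sum_X_mul_pderiv
  have hhess : hessian (a * q) = ((C ∘ u) ⬝ᵥ X) • hessian q +
      Matrix.vecMulVec (C ∘ u) (hessian q *ᵥ X) + Matrix.vecMulVec (hessian q *ᵥ X) (C ∘ u) := by
    rw [ha_eq, hgrad]
    ext1 i j
    simp only [hessian, Matrix.of_apply, pderiv_mul, hu, map_add, pderiv_C, Matrix.add_apply,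
      Matrix.smul_apply, Matrix.vecMulVec_apply, Function.comp_apply, smul_eq_mul]
    ring
  have hadj : (C ∘ u) ⬝ᵥ (hessian q).adjugate *ᵥ (C ∘ u) = C (u ⬝ᵥ A.adjugate *ᵥ u) := by
    have hmap : (hessian q).adjugate = A.adjugate.map C :=
      hA ▸ (RingHom.map_adjugate C A).symm
    rw [hmap, RingHom.map_dotProduct]
    congr 1
    ext1 i
    exact (RingHom.map_mulVec C _ _ i).symm
  refine ⟨2 * (u ⬝ᵥ A.adjugate *ᵥ u), ?_⟩
  rw [hhess, det_smul_add_vecMulVec_add_vecMulVec (isSymm_hessian q), ha_eq, hq_eq, hadj, C_mul,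
    map_ofNat]
  ring

end Identities

section LinearFactor

lemma linearIndependent_pair_of_mulVec {K m n : Type*} [Field K] [Fintype n] {M : Matrix m n K}
    {p v : n → K} (hp : M *ᵥ p ≠ 0) (hv : M *ᵥ v = 0) (hv0 : v ≠ 0) :
    LinearIndependent K ![p, v] := by
  rw [LinearIndependent.pair_iff]
  intro s t hst
  have hs : s = 0 := by
    have h := congrArg (M *ᵥ ·) hst
    simpa [Matrix.mulVec_add, Matrix.mulVec_smul, hv, hp] using h
  exact ⟨hs, by simpa [hs, hv0] using hst⟩

lemma two_mul_eval_smul_add_smul {σ R : Type*} [Fintype σ] [CommRing R] {q : MvPolynomial σ R}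
    (hq : q.IsHomogeneous 2) {p v : σ → R} (hv : hessianAt q p *ᵥ v = 0) (s t : R) :
    2 * eval (s • p + t • v) q = 2 * (s ^ 2 * eval p q) := by
  have h := dotProduct_hessianAt_mulVec_self hq (s • p + t • v)
  have hp := dotProduct_hessianAt_mulVec_self hq p
  rw [hessianAt_eq_of_isHomogeneous_two hq _ p] at h
  simp only [Matrix.mulVec_add, Matrix.mulVec_smul, hv, add_dotProduct, smul_dotProduct, smul_zero,
    add_zero, dotProduct_smul, dotProduct_hessianAt_mulVec_eq_zero hv, hp, smul_eq_mul] at h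
  norm_num at h
  linear_combination -h

section Cubic

variable {σ R : Type*} [Fintype σ] [CommRing R] {f : MvPolynomial σ R} {p v : σ → R}

lemma six_mul_eval_smul_add_smul (hf : f.IsHomogeneous 3) (hv : hessianAt f p *ᵥ v = 0)
    (s t : R) :
    6 * eval (s • p + t • v) f = 6 * (s ^ 3 * eval p f + t ^ 3 * eval v f) := by
  have hvp : hessianAt f v *ᵥ p = 0 := by rw [hessianAt_mulVec_comm hf, hv]
  have h := dotProduct_hessianAt_mulVec_self hf (s • p + t • v)
  rw [hessianAt_smul_add_smul_mulVec hf] at h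
  simp only [Matrix.mulVec_add, Matrix.mulVec_smul, hv, hvp, smul_zero, add_zero, zero_add,
    add_dotProduct, dotProduct_add, smul_dotProduct, dotProduct_smul,
    dotProduct_hessianAt_mulVec_eq_zero hv, dotProduct_hessianAt_mulVec_eq_zero hvp,
    dotProduct_hessianAt_mulVec_self hf, smul_eq_mul] at h
  norm_num at h
  linear_combination -h

end Cubic

lemma det_sq_mul_det_hessianAt_add_smul {R : Type*} [CommRing R] {f : MvPolynomial (Fin 3) R}
    (hf : f.IsHomogeneous 3) {p v : Fin 3 → R} (hp : eval p f = 0) (hv : hessianAt f p *ᵥ v = 0)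
    (r : Fin 3 → R) (t : R) :
    (Matrix.of ![r, p, v]).det ^ 2 * (hessianAt f (p + t • v)).det =
      -(r ⬝ᵥ hessianAt f p *ᵥ p) ^ 2 * (6 * t * eval v f) := by
  have hH (y : Fin 3 → R) :
      hessianAt f (p + t • v) *ᵥ y = hessianAt f p *ᵥ y + t • hessianAt f v *ᵥ y := by
    simpa using hessianAt_smul_add_smul_mulVec hf 1 t p v y
  have hvp : hessianAt f v *ᵥ p = 0 := by rw [hessianAt_mulVec_comm hf, hv]
  rw [← det_dotProduct_mulVec, Matrix.det_fin_three]
  simp only [hH, Matrix.of_apply, Matrix.cons_val, hv, hvp, dotProduct_add, dotProduct_smul,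
    dotProduct_zero, add_zero, zero_add,
    dotProduct_hessianAt_mulVec_eq_zero hv, dotProduct_hessianAt_mulVec_eq_zero hvp,
    dotProduct_hessianAt_mulVec_self hf, hp, mul_zero, smul_eq_mul,
    dotProduct_hessianAt_mulVec_comm f p p r]
  norm_num
  ring

variable {K : Type*} [Field K] {f : MvPolynomial (Fin 3) K}

lemma eval_eq_zero_of_hessianAt_mulVec_eq_zero (h6 : (6 : K) ≠ 0) (hf : f.IsHomogeneous 3) {k : K}
    (hdet : (hessian f).det = C k * f) {p v : Fin 3 → K} (hp : eval p f = 0)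
    (hp' : hessianAt f p *ᵥ p ≠ 0) (hv : hessianAt f p *ᵥ v = 0) : eval v f = 0 := by
  obtain ⟨i, hi⟩ := Function.ne_iff.1 hp'
  have hm : Pi.single i 1 ⬝ᵥ hessianAt f p *ᵥ p ≠ 0 := by simpa using hi
  set m := Pi.single i 1 ⬝ᵥ hessianAt f p *ᵥ p with hm_def
  set δ := (Matrix.of ![Pi.single i 1, p, v]).det
  have hline (t : K) : -m ^ 2 * (6 * t * eval v f) = δ ^ 2 * (k * (t ^ 3 * eval v f)) := by
    have h := six_mul_eval_smul_add_smul hf hv 1 t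
    have hcubic := mul_left_cancel₀ h6 h
    rw [one_smul, hp, mul_zero, zero_add] at hcubic
    rw [hm_def, ← det_sq_mul_det_hessianAt_add_smul hf hp hv, det_hessianAt, hdet, map_mul, eval_C,
      hcubic]
  have hzero : 6 * (6 * m ^ 2 * eval v f) = 0 := by
    linear_combination hline 2 - 8 * hline 1
  simpa [h6, hm] using hzero

variable [IsAlgClosed K]

lemma exists_dvd_totalDegree_eq_one_of_squarefree {n : ℕ} (hf : f.IsHomogeneous n)
    (hn : (n : K) ≠ 0) (hn' : ((n - 1 : ℕ) : K) ≠ 0) (hsq : Squarefree f)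
    (hdet : ∀ x, eval x f = 0 → (hessianAt f x).det = 0)
    (hker : ∀ p v, eval p f = 0 → hessianAt f p *ᵥ p ≠ 0 → hessianAt f p *ᵥ v = 0 →
      ∀ s t : K, eval (s • p + t • v) f = 0) :
    ∃ g, g.totalDegree = 1 ∧ g ∣ f := by
  obtain ⟨p, hp, hgrad⟩ := exists_smooth_zero_of_squarefree hf hn hsq
  obtain ⟨v, hv0, hv⟩ := Matrix.exists_mulVec_eq_zero_iff.2 (hdet p hp)
  have hp' : hessianAt f p *ᵥ p ≠ 0 := by
    rw [hessianAt_mulVec_self hf]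
    exact smul_ne_zero hn' hgrad
  exact exists_dvd_totalDegree_eq_one_of_eval_span_eq_zero
    (linearIndependent_pair_of_mulVec hp' hv hv0) (hker p v hp hp' hv)

lemma exists_eq_linear_mul_linear_of_det_hessian_eq_zero {q : MvPolynomial (Fin 3) K}
    (h2 : (2 : K) ≠ 0) (hq : q.IsHomogeneous 2) (hdet : (hessian q).det = 0) :
    ∃ a b : MvPolynomial (Fin 3) K, a.IsHomogeneous 1 ∧ b.IsHomogeneous 1 ∧ q = a * b := by
  obtain rfl | hq0 := eq_or_ne q 0
  · exact ⟨0, 0, isHomogeneous_zero _ _ _, isHomogeneous_zero _ _ _, by simp⟩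
  obtain ⟨g, hg, hgq⟩ : ∃ g, g.totalDegree = 1 ∧ g ∣ q := by
    by_cases hsq : Squarefree q
    · refine exists_dvd_totalDegree_eq_one_of_squarefree hq (by simpa) (by simp) hsq
        (fun x _ ↦ by rw [det_hessianAt, hdet, map_zero]) fun p v hp _ hv s t ↦ ?_
      refine mul_left_cancel₀ h2 ?_
      rw [two_mul_eval_smul_add_smul hq hv, hp, mul_zero]
    · have hdeg : q.totalDegree ≤ 3 := hq.totalDegree_le.trans (by simp)
      exact exists_dvd_totalDegree_eq_one_of_not_squarefree hq0 hdeg hsq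
  simpa only [hg] using exists_isHomogeneous_mul_of_dvd hq hq0 hgq

lemma exists_eq_linear_mul_quadratic (h6 : (6 : K) ≠ 0) (hf : f.IsHomogeneous 3) (hf0 : f ≠ 0)
    {k : K} (hdet : (hessian f).det = C k * f) :
    ∃ a q : MvPolynomial (Fin 3) K, a.IsHomogeneous 1 ∧ q.IsHomogeneous 2 ∧ f = a * q := by
  have h23 : (2 : K) * 3 ≠ 0 := by convert h6; norm_num
  obtain ⟨g, hg, hgf⟩ : ∃ g, g.totalDegree = 1 ∧ g ∣ f := by
    by_cases hsq : Squarefree f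
    · refine exists_dvd_totalDegree_eq_one_of_squarefree hf
        (by simpa using right_ne_zero_of_mul h23) (by simpa using left_ne_zero_of_mul h23) hsq
        (fun x hx ↦ by rw [det_hessianAt, hdet, map_mul, hx, mul_zero]) fun p v hp hp' hv s t ↦ ?_
      have hv' := eval_eq_zero_of_hessianAt_mulVec_eq_zero h6 hf hdet hp hp' hv
      refine mul_left_cancel₀ h6 ?_
      rw [six_mul_eval_smul_add_smul hf hv, hp, hv', mul_zero, mul_zero, add_zero]
    · exact exists_dvd_totalDegree_eq_one_of_not_squarefree hf0 hf.totalDegree_le hsq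
  simpa only [hg] using exists_isHomogeneous_mul_of_dvd hf hf0 hgf

end LinearFactor

section CompleteReducibility

lemma exists_det_hessian_mul_mul_eq_C_mul {R : Type*} [CommRing R] {a b c : MvPolynomial (Fin 3) R}
    (ha : a.IsHomogeneous 1) (hb : b.IsHomogeneous 1) (hc : c.IsHomogeneous 1) :
    ∃ k : R, (hessian (a * b * c)).det = C k * (a * b * c) := by
  obtain ⟨k, hk⟩ := exists_det_hessian_linear_mul_quadratic ha (hb.mul hc)
  refine ⟨-k, ?_⟩
  rw [mul_assoc, hk, det_hessian_mul_eq_zero hb hc, C_neg]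
  ring

variable {K : Type*} [Field K] [IsAlgClosed K]

lemma exists_eq_linear_mul_linear_of_det_hessian_mul {a q : MvPolynomial (Fin 3) K}
    (h2 : (2 : K) ≠ 0) (ha : a.IsHomogeneous 1) (ha0 : a ≠ 0) (hq : q.IsHomogeneous 2) {k : K}
    (hdet : (hessian (a * q)).det = C k * (a * q)) :
    ∃ b c : MvPolynomial (Fin 3) K, b.IsHomogeneous 1 ∧ c.IsHomogeneous 1 ∧ q = b * c := by
  obtain ⟨A, hA⟩ := exists_hessian_eq_map_C hq
  have hdetA : (hessian q).det = C A.det := hA ▸ (RingHom.map_det C A).symm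
  obtain ⟨c, hc⟩ := exists_det_hessian_linear_mul_quadratic ha hq
  have hprop : C (4 * A.det) * a ^ 2 = C (k + c) * q := by
    refine mul_left_cancel₀ ha0 ?_
    rw [C_add, C_mul, ← hdetA, map_ofNat]
    linear_combination hdet - hc
  by_cases hA0 : A.det = 0
  · exact exists_eq_linear_mul_linear_of_det_hessian_eq_zero h2 hq (by rw [hdetA, hA0, C_0])
  have hkc : k + c ≠ 0 := by
    intro h0
    have h4 : (4 : K) ≠ 0 := by convert mul_ne_zero h2 h2; norm_num
    rw [h0, C_0, zero_mul, mul_eq_zero, C_eq_zero] at hprop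
    exact hprop.elim (mul_ne_zero h4 hA0) (pow_ne_zero 2 ha0)
  refine ⟨C ((k + c)⁻¹ * (4 * A.det)) * a, a, ha.C_mul _, ha, ?_⟩
  calc
    q = C (k + c)⁻¹ * (C (k + c) * q) := by rw [← mul_assoc, ← C_mul, inv_mul_cancel₀ hkc]; simp
    _ = C ((k + c)⁻¹ * (4 * A.det)) * a * a := by rw [← hprop, C_mul (a := (k + c)⁻¹)]; ring

lemma exists_eq_linear_mul_linear_mul_linear {f : MvPolynomial (Fin 3) K} (h6 : (6 : K) ≠ 0)
    (hf : f.IsHomogeneous 3) {k : K} (hdet : (hessian f).det = C k * f) :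
    ∃ a b c : MvPolynomial (Fin 3) K,
      a.IsHomogeneous 1 ∧ b.IsHomogeneous 1 ∧ c.IsHomogeneous 1 ∧ f = a * b * c := by
  obtain rfl | hf0 := eq_or_ne f 0
  · exact ⟨0, 0, 0, isHomogeneous_zero _ _ _, isHomogeneous_zero _ _ _, isHomogeneous_zero _ _ _,
      by simp⟩
  have h2 : (2 : K) ≠ 0 := fun h ↦ h6 (by linear_combination 3 * h)
  obtain ⟨a, q, ha, hq, rfl⟩ := exists_eq_linear_mul_quadratic h6 hf hf0 hdet
  obtain ⟨b, c, hb, hc, rfl⟩ :=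
    exists_eq_linear_mul_linear_of_det_hessian_mul h2 ha (left_ne_zero_of_mul hf0) hq hdet
  exact ⟨a, b, c, ha, hb, hc, (mul_assoc a b c).symm⟩

lemma exists_eq_C_mul_of_sq_eq_C_mul_sq {σ : Type*} {D f : MvPolynomial σ K} {s : K}
    (h : D ^ 2 = C s * f ^ 2) : ∃ k : K, D = C k * f := by
  obtain ⟨d, rfl⟩ := IsAlgClosed.exists_pow_nat_eq s two_pos
  rw [C_pow, ← mul_pow, sq_eq_sq_iff_eq_or_eq_neg] at h
  obtain h | h := h
  · exact ⟨d, h⟩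
  · exact ⟨-d, by rw [h, C_neg, neg_mul]⟩

end CompleteReducibility

end TernaryCubic

open TernaryCubic in
theorem stmt9_general {K : Type*} [Field K] [IsAlgClosed K] (h6 : (6 : K) ≠ 0)
    {f : MvPolynomial (Fin 3) K} (hf : f.IsHomogeneous 3) :
    (∃ a b c : MvPolynomial (Fin 3) K,
      a.IsHomogeneous 1 ∧ b.IsHomogeneous 1 ∧ c.IsHomogeneous 1 ∧ f = a * b * c) ↔
      ∃ s : K, (hessian f).det ^ 2 = C s * f ^ 2 := by
  constructor
  · rintro ⟨a, b, c, ha, hb, hc, rfl⟩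
    obtain ⟨k, hk⟩ := exists_det_hessian_mul_mul_eq_C_mul ha hb hc
    exact ⟨k ^ 2, by rw [hk, mul_pow, C_pow]⟩
  · rintro ⟨s, hs⟩
    obtain ⟨k, hk⟩ := exists_eq_C_mul_of_sq_eq_C_mul_sq hs
    exact exists_eq_linear_mul_linear_mul_linear h6 hf hk

theorem stmt9 (f : MvPolynomial (Fin 3) ℂ) (hf : f.IsHomogeneous 3) :
    CompletelyReducible f ↔ ∃ s : ℂ, (hessianDet f) ^ 2 = C s * f ^ 2 :=
  stmt9_general (by norm_num) hf
end

section
/- Let f be a ternary cubic form over ℂ whose coefficient f₃₃₃ of x₃³ is nonzero. Let D = det(∂ᵢ∂ⱼ f) be the Hessian determinant of f (a cubic form), let D₃₃₃ be its coefficient of x₃³, and set g = D₃₃₃·f − f₃₃₃·D. Then f is completely reducible if and only if the coefficients of x₁²x₃, x₁x₂x₃, x₂²x₃, x₁x₃² and x₂x₃² in g are all zero. -/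
open MvPolynomial

/-!
Write `Xᵢ` for the variable with index `i - 1`. The Hessian determinant is covariant under linear
substitutions, and that of `X₁X₂X₃` is twice `X₁X₂X₃`. Hence the Hessian determinant of a product of
three linear forms is a multiple of that product, and `g = 0`.

Conversely, `g₃₃₃ = 0` always holds, so the vanishing of the five coefficients means `∂g/∂X₃ = 0`.
This condition is invariant under scaling `f` and under substitutions fixing the vector `e₃`, so
`f` may be taken to be `X₃³ + P X₃ + Q` with `P`, `Q` binary forms in `X₁`, `X₂`. The condition
then says that `P` is apolar to `Q` and that `3 H(Q) = 4 H(P) P`, where `H` is the Hessian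
determinant of binary forms. If `H(P) ≠ 0`, then `P = X₁X₂` after a substitution, and the
condition forces `Q = αX₁³ + βX₂³` with `27αβ = -1`, so that `f` factors as
`x³ + y³ + z³ - 3xyz` does. If `H(P) = 0`, then `P` and `Q` are multiples of the powers `l²` and
`l³` of one linear form, and `f` is a binary cubic form in `X₃` and `l`.
-/

section LinearSubstitution

variable {R σ : Type*} [CommSemiring R]

lemma eval_single_eq_coeff [DecidableEq σ] {f : MvPolynomial σ R} {n : ℕ}
    (hf : f.IsHomogeneous n) (i : σ) :
    eval (Pi.single i 1) f = coeff (Finsupp.single i n) f := by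
  rw [eval_eq, Finset.sum_eq_single (Finsupp.single i n)]
  · rw [Finset.prod_eq_one, mul_one]
    intro j _
    obtain rfl | hji := eq_or_ne j i <;> simp [*]
  · intro d hd hdi
    obtain ⟨j, hji, hdj⟩ : ∃ j ≠ i, d j ≠ 0 := by
      by_contra! hd_off
      have hd_single : d = Finsupp.single i (d i) := by
        ext j
        obtain rfl | hji := eq_or_ne j i <;> simp [*]
      have hdeg : d.degree = n :=
        not_imp_comm.mp hf.coeff_eq_zero (mem_support_iff.mp hd)
      rw [hd_single, Finsupp.degree_single] at hdeg
      exact hdi (hdeg ▸ hd_single)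
    rw [Finset.prod_eq_zero (Finsupp.mem_support_iff.mpr hdj) (by simp [hji, hdj]), mul_zero]
  · intro hn
    rw [notMem_support_iff.mp hn, zero_mul]

variable [Fintype σ]

lemma eq_sum_C_mul_X_of_isHomogeneous_one {f : MvPolynomial σ R} (hf : f.IsHomogeneous 1) :
    f = ∑ i, C (coeff (Finsupp.single i 1) f) * X i := by
  have pderiv_eq (i : σ) : pderiv i f = C (coeff (Finsupp.single i 1) f) := by
    rw [totalDegree_eq_zero_iff_eq_C.mp ((totalDegree_zero_iff_isHomogeneous σ).mpr hf.pderiv),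
      coeff_pderiv]
    simp
  simpa [pderiv_eq, mul_comm] using hf.sum_X_mul_pderiv.symm

/-- The substitution `X i ↦ ∑ j, M i j * X j`, that is `f ↦ f ∘ M`. -/
noncomputable def linSubst (M : Matrix σ σ R) : MvPolynomial σ R →ₐ[R] MvPolynomial σ R :=
  bind₁ M.toMvPolynomial

lemma linSubst_X (M : Matrix σ σ R) (i : σ) : linSubst M (X i) = ∑ j, C (M i j) * X j := by
  simp [linSubst, Matrix.toMvPolynomial, C_mul_X_eq_monomial]

lemma linSubst_C (M : Matrix σ σ R) (a : R) : linSubst M (C a) = C a :=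
  bind₁_C_right _ _

lemma linSubst_one [DecidableEq σ] (f : MvPolynomial σ R) : linSubst 1 f = f := by
  rw [linSubst, Matrix.toMvPolynomial_one, bind₁_X_left, AlgHom.id_apply]

lemma linSubst_linSubst (M N : Matrix σ σ R) (f : MvPolynomial σ R) :
    linSubst N (linSubst M f) = linSubst (M * N) f := by
  simp only [linSubst, bind₁_bind₁, ← Matrix.toMvPolynomial_mul]

lemma isHomogeneous_linSubst (M : Matrix σ σ R) {f : MvPolynomial σ R} {n : ℕ}
    (hf : f.IsHomogeneous n) : (linSubst M f).IsHomogeneous n := by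
  rw [← one_mul n]
  exact hf.aeval _ M.toMvPolynomial_isHomogeneous

lemma eval_linSubst (M : Matrix σ σ R) (v : σ → R) (f : MvPolynomial σ R) :
    eval v (linSubst M f) = eval (M.mulVec v) f := by
  rw [linSubst, ← aeval_eq_eval, ← aeval_eq_eval, aeval_bind₁]
  exact congrArg (aeval · f) (funext fun i => M.toMvPolynomial_eval_eq_apply i v)

lemma pderiv_linSubst (M : Matrix σ σ R) (j : σ) (f : MvPolynomial σ R) :
    pderiv j (linSubst M f) = ∑ i, C (M i j) * linSubst M (pderiv i f) := by
  classical
  induction f using MvPolynomial.induction_on with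
  | C a => simp
  | add p q hp hq => simp only [map_add, hp, hq, mul_add, Finset.sum_add_distrib]
  | mul_X p k hp =>
    have pderiv_linSubst_X : pderiv j (linSubst M (X k)) = C (M k j) := by
      simp [linSubst_X, pderiv_X, Pi.single_apply]
    simp only [map_mul, pderiv_mul, map_add, hp, pderiv_linSubst_X, pderiv_X, mul_add,
      Finset.sum_add_distrib, Finset.sum_mul, mul_assoc]
    simp [Pi.single_apply, apply_ite, mul_comm]

variable [DecidableEq σ] {M : Matrix σ σ R} {j : σ}

lemma pderiv_linSubst_of_col_eq_single (hM : M.col j = Pi.single j 1) (f : MvPolynomial σ R) :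
    pderiv j (linSubst M f) = linSubst M (pderiv j f) := by
  have entry (i : σ) : M i j = if i = j then 1 else 0 := by
    simpa [Pi.single_apply] using congrFun hM i
  simp [pderiv_linSubst, entry, apply_ite]

lemma coeff_linSubst_of_col_eq_single (hM : M.col j = Pi.single j 1)
    {f : MvPolynomial σ R} {n : ℕ} (hf : f.IsHomogeneous n) :
    coeff (Finsupp.single j n) (linSubst M f) = coeff (Finsupp.single j n) f := by
  rw [← eval_single_eq_coeff (isHomogeneous_linSubst M hf), eval_linSubst,
    Matrix.mulVec_single_one, hM, eval_single_eq_coeff hf]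

lemma col_inv_eq_single {R : Type*} [CommRing R] {M : Matrix σ σ R} (hdet : IsUnit M.det)
    (hM : M.col j = Pi.single j 1) : M⁻¹.col j = Pi.single j 1 := by
  rw [← Matrix.mulVec_single_one] at hM ⊢
  conv_lhs => rw [← hM, Matrix.mulVec_mulVec, Matrix.nonsing_inv_mul M hdet, Matrix.one_mulVec]

end LinearSubstitution

section Hessian

variable {R σ : Type*} [CommRing R]

/-- The Hessian matrix of second partial derivatives. `hessianDet` is its determinant for
ternary forms over `ℂ`. -/
noncomputable def hessian (f : MvPolynomial σ R) : Matrix σ σ (MvPolynomial σ R) :=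
  Matrix.of fun i j => pderiv i (pderiv j f)

variable [Fintype σ]

lemma hessian_linSubst (M : Matrix σ σ R) (f : MvPolynomial σ R) :
    hessian (linSubst M f) = (M.map C).transpose * (hessian f).map (linSubst M) * M.map C := by
  ext1 i j
  simp only [hessian, Matrix.of_apply, pderiv_linSubst, map_sum, pderiv_C_mul, Matrix.mul_apply,
    Matrix.transpose_apply, Matrix.map_apply, Finset.mul_sum, Finset.sum_mul]
  exact Finset.sum_congr rfl fun k _ => Finset.sum_congr rfl fun l _ => by ring

variable [DecidableEq σ]

lemma det_hessian_linSubst (M : Matrix σ σ R) (f : MvPolynomial σ R) :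
    (hessian (linSubst M f)).det = C (M.det ^ 2) * linSubst M (hessian f).det := by
  have det_map_C : (M.map C).det = (C M.det : MvPolynomial σ R) := (RingHom.map_det C M).symm
  have det_map_linSubst : ((hessian f).map (linSubst M)).det = linSubst M (hessian f).det :=
    ((linSubst M).map_det (hessian f)).symm
  rw [hessian_linSubst, Matrix.det_mul, Matrix.det_mul, Matrix.det_transpose, det_map_C,
    det_map_linSubst, C_pow]
  ring

lemma det_hessian_C_mul (a : R) (f : MvPolynomial σ R) :
    (hessian (C a * f)).det = C (a ^ Fintype.card σ) * (hessian f).det := by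
  have hessian_C_mul : hessian (C a * f) = (C a : MvPolynomial σ R) • hessian f := by
    ext1 i j
    simp only [hessian, Matrix.of_apply, pderiv_C_mul, Matrix.smul_apply, smul_eq_mul]
  rw [hessian_C_mul, Matrix.det_smul, C_pow]

lemma isHomogeneous_det_hessian {f : MvPolynomial σ R} {n : ℕ} (hf : f.IsHomogeneous n) :
    (hessian f).det.IsHomogeneous (Fintype.card σ * (n - 2)) := by
  rw [Matrix.det_apply']
  refine IsHomogeneous.sum _ _ _ fun τ _ => ?_
  rw [← map_intCast (C : R →+* MvPolynomial σ R)]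
  refine IsHomogeneous.C_mul ?_ _
  simpa using IsHomogeneous.prod Finset.univ (fun i => hessian f (τ i) i) (fun _ => n - 2)
    fun i _ => hf.pderiv.pderiv

end Hessian

section ProductOfLinearForms

/-- A product of three linear forms, in any variables over any coefficient semiring. For ternary
forms over `ℂ` this unfolds to `CompletelyReducible`. -/
def IsProductOfLinearForms {R σ : Type*} [CommSemiring R] (f : MvPolynomial σ R) : Prop :=
  ∃ a b c : MvPolynomial σ R,
    a.IsHomogeneous 1 ∧ b.IsHomogeneous 1 ∧ c.IsHomogeneous 1 ∧ f = a * b * c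

section CommRing

variable {R σ : Type*} [CommRing R]

lemma IsProductOfLinearForms.C_mul {f : MvPolynomial σ R} (hf : IsProductOfLinearForms f) (r : R) :
    IsProductOfLinearForms (C r * f) := by
  obtain ⟨a, b, c, ha, hb, hc, rfl⟩ := hf
  exact ⟨C r * a, b, c, ha.C_mul r, hb, hc, by ring⟩

variable [Fintype σ]

lemma IsProductOfLinearForms.map_linSubst {f : MvPolynomial σ R} (hf : IsProductOfLinearForms f)
    (M : Matrix σ σ R) : IsProductOfLinearForms (linSubst M f) := by
  obtain ⟨a, b, c, ha, hb, hc, rfl⟩ := hf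
  exact ⟨_, _, _, isHomogeneous_linSubst M ha, isHomogeneous_linSubst M hb,
    isHomogeneous_linSubst M hc, by simp only [map_mul]⟩

lemma IsProductOfLinearForms.of_linSubst [DecidableEq σ] {f : MvPolynomial σ R}
    {M : Matrix σ σ R} (hM : IsUnit M.det) (hf : IsProductOfLinearForms (linSubst M f)) :
    IsProductOfLinearForms f := by
  simpa only [linSubst_linSubst, Matrix.mul_nonsing_inv M hM, linSubst_one]
    using hf.map_linSubst M⁻¹

lemma IsProductOfLinearForms.exists_eq_linSubst {f : MvPolynomial (Fin 3) R}
    (hf : IsProductOfLinearForms f) :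
    ∃ M : Matrix (Fin 3) (Fin 3) R, f = linSubst M (X 0 * X 1 * X 2) := by
  obtain ⟨a, b, c, ha, hb, hc, rfl⟩ := hf
  refine ⟨Matrix.of ![fun j => coeff (Finsupp.single j 1) a, fun j => coeff (Finsupp.single j 1) b,
    fun j => coeff (Finsupp.single j 1) c], ?_⟩
  simp only [map_mul, linSubst_X]
  exact congrArg₂ _ (congrArg₂ _ (eq_sum_C_mul_X_of_isHomogeneous_one ha)
    (eq_sum_C_mul_X_of_isHomogeneous_one hb)) (eq_sum_C_mul_X_of_isHomogeneous_one hc)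

lemma det_hessian_X_mul_X_mul_X :
    (hessian (X 0 * X 1 * X 2 : MvPolynomial (Fin 3) R)).det = C 2 * (X 0 * X 1 * X 2) := by
  have hessian_eq : hessian (X 0 * X 1 * X 2 : MvPolynomial (Fin 3) R) =
      !![0, X 2, X 1; X 2, 0, X 0; X 1, X 0, 0] := by
    ext1 i j
    fin_cases i <;> fin_cases j <;> simp [hessian, pderiv_X, Pi.single_apply]
  simp only [hessian_eq, Matrix.det_fin_three, Matrix.of_apply, Matrix.cons_val, map_ofNat C 2]
  ring

lemma IsProductOfLinearForms.exists_det_hessian_eq_C_mul {f : MvPolynomial (Fin 3) R}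
    (hf : IsProductOfLinearForms f) :
    ∃ r : R, (hessian f).det = C r * f := by
  obtain ⟨M, rfl⟩ := hf.exists_eq_linSubst
  refine ⟨M.det ^ 2 * 2, ?_⟩
  rw [det_hessian_linSubst, det_hessian_X_mul_X_mul_X, map_mul, linSubst_C, ← mul_assoc,
    ← MvPolynomial.C_mul]

end CommRing

lemma cube_add_cube_add_cube_sub_eq_mul {A : Type*} [CommRing A] {ω : A} (hω : ω ^ 2 + ω + 1 = 0)
    (x y z : A) :
    x ^ 3 + y ^ 3 + z ^ 3 - 3 * x * y * z =
      (x + y + z) * (x + ω * y + ω ^ 2 * z) * (x + ω ^ 2 * y + ω * z) := by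
  grind

section IsAlgClosed

variable {K σ : Type*} [Field K] [IsAlgClosed K]

lemma exists_add_eq_zero_and_esymm_eq (c d : K) :
    ∃ r s t : K, r + s + t = 0 ∧ r * s + r * t + s * t = c ∧ r * s * t = d := by
  let P : Cubic K := ⟨1, 0, c, -d⟩
  have ha : P.a ≠ 0 := one_ne_zero
  obtain ⟨r, s, t, hroots⟩ := (Cubic.splits_iff_roots_eq_three (φ := RingHom.id K) ha).mp
    (IsAlgClosed.splits _)
  have hb := Cubic.b_eq_three_roots ha hroots
  have hc := Cubic.c_eq_three_roots ha hroots
  have hd := Cubic.d_eq_three_roots ha hroots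
  simp only [P, RingHom.id_apply, one_mul] at hb hc hd
  exact ⟨r, s, t, (neg_eq_zero.mp hb.symm), hc.symm, (neg_injective hd).symm⟩

lemma isProductOfLinearForms_cube_add_sq_mul_add_cube {z l : MvPolynomial σ K}
    (hz : z.IsHomogeneous 1) (hl : l.IsHomogeneous 1) (c d : K) :
    IsProductOfLinearForms (z ^ 3 + C c * l ^ 2 * z + C d * l ^ 3) := by
  obtain ⟨r, s, t, hsum, rfl, rfl⟩ := exists_add_eq_zero_and_esymm_eq c d
  refine ⟨z + C r * l, z + C s * l, z + C t * l, hz.add (hl.C_mul r), hz.add (hl.C_mul s),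
    hz.add (hl.C_mul t), ?_⟩
  have hsum' : (C r + C s + C t : MvPolynomial σ K) = 0 := by rw [← C_add, ← C_add, hsum, C_0]
  simp only [map_add, map_mul]
  linear_combination -z ^ 2 * l * hsum'

variable [CharZero K]

lemma isProductOfLinearForms_cube_add_mul_add_cubes {x y z : MvPolynomial σ K}
    (hx : x.IsHomogeneous 1) (hy : y.IsHomogeneous 1) (hz : z.IsHomogeneous 1) {α β : K}
    (hαβ : 27 * (α * β) = -1) :
    IsProductOfLinearForms (z ^ 3 + x * y * z + (C α * x ^ 3 + C β * y ^ 3)) := by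
  obtain ⟨ω, hω⟩ := IsAlgClosed.exists_root (Polynomial.cyclotomic 3 K)
    (Polynomial.degree_cyclotomic_pos 3 K three_pos).ne'
  have hω : ω ^ 2 + ω + 1 = 0 := by simpa [Polynomial.cyclotomic_three] using hω
  obtain ⟨a, rfl⟩ := IsAlgClosed.exists_pow_nat_eq α three_pos
  have ha : a ≠ 0 := by rintro rfl; simp at hαβ
  obtain ⟨b, hab⟩ : ∃ b, 3 * (a * b) = -1 := ⟨-1 / (3 * a), by field_simp⟩
  have hβ : β = b ^ 3 := by
    apply mul_left_cancel₀ (pow_ne_zero 3 ha)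
    linear_combination hαβ / 27 - (9 * (a * b) ^ 2 - 3 * (a * b) + 1) * hab / 27
  have hωC : (C ω ^ 2 + C ω + 1 : MvPolynomial σ K) = 0 := by
    rw [← C_pow, ← C_1, ← C_add, ← C_add, hω, C_0]
  have habC : (3 * (C a * C b) : MvPolynomial σ K) = -1 := by
    rw [← map_ofNat C 3, ← C_mul, ← C_mul, hab, C_neg, C_1]
  have hax := hx.C_mul a
  have hby := hy.C_mul b
  refine ⟨z + C a * x + C b * y, z + C ω * (C a * x) + C (ω ^ 2) * (C b * y),
    z + C (ω ^ 2) * (C a * x) + C ω * (C b * y), (hz.add hax).add hby,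
    (hz.add (hax.C_mul ω)).add (hby.C_mul _), (hz.add (hax.C_mul _)).add (hby.C_mul ω), ?_⟩
  rw [hβ, C_pow, C_pow, C_pow, ← cube_add_cube_add_cube_sub_eq_mul hωC]
  linear_combination x * y * z * habC

end IsAlgClosed

end ProductOfLinearForms

section BinaryForms

lemma pderiv_eq_zero_iff {R σ : Type*} [CommRing R] [IsDomain R] [CharZero R] {i : σ}
    {f : MvPolynomial σ R} : pderiv i f = 0 ↔ ∀ m, m i ≠ 0 → coeff m f = 0 := by
  simp only [MvPolynomial.ext_iff, coeff_pderiv, coeff_zero, mul_eq_zero, Nat.cast_add_one_ne_zero,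
    or_false]
  refine ⟨fun h m hm => ?_, fun h m => h _ (by simp)⟩
  rw [← Finsupp.sub_add_single_one_cancel hm]
  exact h _

section CommRing

variable {R : Type*} [CommRing R]

/-- The binary quadratic form with coefficients `a, b, c` in the variables `X 0, X 1`, regarded as
a ternary form. -/
noncomputable def binaryQuadratic (a b c : R) : MvPolynomial (Fin 3) R :=
  C a * X 0 ^ 2 + C b * (X 0 * X 1) + C c * X 1 ^ 2

/-- The binary cubic form with coefficients `a, b, c, d` in the variables `X 0, X 1`, regarded as
a ternary form. -/
noncomputable def binaryCubic (a b c d : R) : MvPolynomial (Fin 3) R :=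
  C a * X 0 ^ 3 + C b * (X 0 ^ 2 * X 1) + C c * (X 0 * X 1 ^ 2) + C d * X 1 ^ 3

lemma pderiv_two_binaryQuadratic (a b c : R) : pderiv 2 (binaryQuadratic a b c) = 0 := by
  simp [binaryQuadratic, pderiv_X]

lemma pderiv_two_binaryCubic (a b c d : R) : pderiv 2 (binaryCubic a b c d) = 0 := by
  simp [binaryCubic, pderiv_X]

lemma isHomogeneous_binaryQuadratic (a b c : R) : (binaryQuadratic a b c).IsHomogeneous 2 := by
  have hX (i : Fin 3) := isHomogeneous_X R i
  exact ((((hX 0).pow 2).C_mul a).add (((hX 0).mul (hX 1)).C_mul b)).add (((hX 1).pow 2).C_mul c)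

lemma isHomogeneous_binaryCubic (a b c d : R) : (binaryCubic a b c d).IsHomogeneous 3 := by
  have hX (i : Fin 3) := isHomogeneous_X R i
  exact (((((hX 0).pow 3).C_mul a).add ((((hX 0).pow 2).mul (hX 1)).C_mul b)).add
    (((hX 0).mul ((hX 1).pow 2)).C_mul c)).add (((hX 1).pow 3).C_mul d)

variable [IsDomain R] [CharZero R] {f : MvPolynomial (Fin 3) R}

lemma eq_sum_antidiagonal_of_pderiv_two_eq_zero {n : ℕ} (hf : f.IsHomogeneous n)
    (hf2 : pderiv 2 f = 0) :
    f = ∑ p ∈ Finset.HasAntidiagonal.antidiagonal n,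
      C (coeff (Finsupp.single 0 p.1 + Finsupp.single 1 p.2) f) * (X 0 ^ p.1 * X 1 ^ p.2) := by
  have term_eq (p : ℕ × ℕ) (r : R) : C r * (X 0 ^ p.1 * X 1 ^ p.2) =
      monomial (Finsupp.single 0 p.1 + Finsupp.single (1 : Fin 3) p.2) r := by
    simp [X_pow_eq_monomial, C_mul_monomial, monomial_mul]
  ext m
  simp only [term_eq, coeff_sum, coeff_monomial]
  by_cases hm : m 2 = 0 ∧ m.degree = n
  · have hm_eq : Finsupp.single 0 (m 0) + Finsupp.single 1 (m 1) = m := by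
      ext i; fin_cases i <;> simp [hm.1]
    rw [Finset.sum_eq_single (m 0, m 1)]
    · simp [hm_eq]
    · rintro p - hp
      refine if_neg fun h => hp ?_
      simp [← h]
    · intro h
      refine absurd (Finset.HasAntidiagonal.mem_antidiagonal.mpr ?_) h
      simpa [Finsupp.degree_eq_sum, Fin.sum_univ_three, hm.1] using hm.2
  · have hcoeff : coeff m f = 0 := by
      by_contra hne
      exact hm ⟨not_imp_comm.mp (pderiv_eq_zero_iff.mp hf2 m) hne,
        not_imp_comm.mp hf.coeff_eq_zero hne⟩
    rw [hcoeff, Finset.sum_eq_zero]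
    rintro p -
    split_ifs with h <;> simp [h, hcoeff]

lemma exists_eq_binaryQuadratic (hf : f.IsHomogeneous 2) (hf2 : pderiv 2 f = 0) :
    ∃ a b c : R, f = binaryQuadratic a b c := by
  have h := eq_sum_antidiagonal_of_pderiv_two_eq_zero hf hf2
  simp only [Finset.Nat.sum_antidiagonal_succ', Finset.Nat.antidiagonal_zero,
    Finset.sum_singleton, Nat.reduceAdd, pow_zero, pow_one, one_mul, mul_one, ← add_assoc] at h
  exact ⟨_, _, _, h⟩

lemma exists_eq_binaryCubic (hf : f.IsHomogeneous 3) (hf2 : pderiv 2 f = 0) :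
    ∃ a b c d : R, f = binaryCubic a b c d := by
  have h := eq_sum_antidiagonal_of_pderiv_two_eq_zero hf hf2
  simp only [Finset.Nat.sum_antidiagonal_succ', Finset.Nat.antidiagonal_zero,
    Finset.sum_singleton, Nat.reduceAdd, pow_zero, pow_one, one_mul, mul_one, ← add_assoc] at h
  exact ⟨_, _, _, _, h⟩

end CommRing

end BinaryForms

section HessianDefect

section CommRing

variable {R : Type*} [CommRing R] {f : MvPolynomial (Fin 3) R}

/-- The form `g = D₃₃₃ f - f₃₃₃ D`, where `D` is the Hessian determinant of `f`. It vanishes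
when `D` is a constant multiple of `f`. -/
noncomputable def hessianDefect (f : MvPolynomial (Fin 3) R) : MvPolynomial (Fin 3) R :=
  C (coeff (Finsupp.single 2 3) (hessian f).det) * f -
    C (coeff (Finsupp.single 2 3) f) * (hessian f).det

lemma IsProductOfLinearForms.hessianDefect_eq_zero (hf : IsProductOfLinearForms f) :
    hessianDefect f = 0 := by
  obtain ⟨r, hr⟩ := hf.exists_det_hessian_eq_C_mul
  rw [hessianDefect, hr, coeff_C_mul, MvPolynomial.C_mul]
  ring

lemma isHomogeneous_hessianDefect (hf : f.IsHomogeneous 3) : (hessianDefect f).IsHomogeneous 3 :=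
  (hf.C_mul _).sub ((isHomogeneous_det_hessian hf).C_mul _)

lemma coeff_single_two_hessianDefect (f : MvPolynomial (Fin 3) R) :
    coeff (Finsupp.single 2 3) (hessianDefect f) = 0 := by
  rw [hessianDefect, coeff_sub, coeff_C_mul, coeff_C_mul, mul_comm, sub_self]

lemma hessianDefect_C_mul (a : R) (f : MvPolynomial (Fin 3) R) :
    hessianDefect (C a * f) = C (a ^ 4) * hessianDefect f := by
  rw [hessianDefect, det_hessian_C_mul, coeff_C_mul, coeff_C_mul, Fintype.card_fin]
  simp only [hessianDefect, C_mul, C_pow]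
  ring

lemma hessianDefect_linSubst {M : Matrix (Fin 3) (Fin 3) R} (hM : M.col 2 = Pi.single 2 1)
    (hf : f.IsHomogeneous 3) :
    hessianDefect (linSubst M f) = C (M.det ^ 2) * linSubst M (hessianDefect f) := by
  have coeff_det : coeff (Finsupp.single 2 3) (linSubst M (hessian f).det) =
      coeff (Finsupp.single 2 3) (hessian f).det :=
    coeff_linSubst_of_col_eq_single hM (isHomogeneous_det_hessian hf)
  simp only [hessianDefect, det_hessian_linSubst, coeff_C_mul, coeff_det,
    coeff_linSubst_of_col_eq_single hM hf, map_sub, map_mul, linSubst_C]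
  ring

lemma pderiv_two_hessianDefect_linSubst {M : Matrix (Fin 3) (Fin 3) R}
    (hM : M.col 2 = Pi.single 2 1) (hf : f.IsHomogeneous 3)
    (hdefect : pderiv 2 (hessianDefect f) = 0) :
    pderiv 2 (hessianDefect (linSubst M f)) = 0 := by
  rw [hessianDefect_linSubst hM hf, pderiv_C_mul, pderiv_linSubst_of_col_eq_single hM, hdefect,
    map_zero, mul_zero]

lemma pderiv_two_hessianDefect_iff [IsDomain R] [CharZero R] (hf : f.IsHomogeneous 3) :
    pderiv 2 (hessianDefect f) = 0 ↔
      (hessianDefect f).coeff (Finsupp.single 0 2 + Finsupp.single 2 1) = 0 ∧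
      (hessianDefect f).coeff (Finsupp.single 0 1 + Finsupp.single 1 1 + Finsupp.single 2 1) = 0 ∧
      (hessianDefect f).coeff (Finsupp.single 1 2 + Finsupp.single 2 1) = 0 ∧
      (hessianDefect f).coeff (Finsupp.single 0 1 + Finsupp.single 2 2) = 0 ∧
      (hessianDefect f).coeff (Finsupp.single 1 1 + Finsupp.single 2 2) = 0 := by
  rw [pderiv_eq_zero_iff]
  constructor
  · intro h
    refine ⟨h _ ?_, h _ ?_, h _ ?_, h _ ?_, h _ ?_⟩ <;> simp
  rintro ⟨h002, h012, h112, h022, h122⟩ m hm2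
  by_cases hdeg : m.degree = 3
  · have hm : m = Finsupp.single 0 (m 0) + Finsupp.single 1 (m 1) + Finsupp.single 2 (m 2) := by
      ext i; fin_cases i <;> simp
    rw [Finsupp.degree_eq_sum, Fin.sum_univ_three] at hdeg
    rw [hm]
    generalize m 0 = i, m 1 = j, m 2 = k at hdeg hm2
    have hi : i ≤ 2 := by omega
    have hj : j ≤ 2 := by omega
    obtain rfl : k = 3 - i - j := by omega
    interval_cases i <;> interval_cases j <;> first
      | exact h012
      | omega
      | simp [coeff_single_two_hessianDefect, h002, h112, h022, h122]
  · exact (isHomogeneous_hessianDefect hf).coeff_eq_zero hdeg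

end CommRing

end HessianDefect

section DepressedCubic

section CommRing

variable {R : Type*} [CommRing R]

/-- The ternary cubic form `X₃³ + P X₃ + Q` without a term in `X₃²`, where `P` and `Q` are the
binary forms with coefficients `a, b, c` and `p, q, r, s`. -/
noncomputable def depressedCubic (a b c p q r s : R) : MvPolynomial (Fin 3) R :=
  X 2 ^ 3 + binaryQuadratic a b c * X 2 + binaryCubic p q r s

lemma isHomogeneous_depressedCubic (a b c p q r s : R) :
    (depressedCubic a b c p q r s).IsHomogeneous 3 :=
  (((isHomogeneous_X R 2).pow 3).add ((isHomogeneous_binaryQuadratic a b c).mul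
    (isHomogeneous_X R 2))).add (isHomogeneous_binaryCubic p q r s)

lemma hessian_depressedCubic (a b c p q r s : R) :
    hessian (depressedCubic a b c p q r s) =
      !![2 * C a * X 2 + (6 * C p * X 0 + 2 * C q * X 1),
          C b * X 2 + 2 * (C q * X 0 + C r * X 1), 2 * C a * X 0 + C b * X 1;
        C b * X 2 + 2 * (C q * X 0 + C r * X 1),
          2 * C c * X 2 + (2 * C r * X 0 + 6 * C s * X 1), C b * X 0 + 2 * C c * X 1;
        2 * C a * X 0 + C b * X 1, C b * X 0 + 2 * C c * X 1, 6 * X 2] := by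
  have pderiv_ofNat (i : Fin 3) (n : ℕ) [n.AtLeastTwo] :
      pderiv i (OfNat.ofNat n : MvPolynomial (Fin 3) R) = 0 := by
    rw [← map_ofNat C n, pderiv_C]
  ext1 i j
  fin_cases i <;> fin_cases j <;>
    simp only [hessian, depressedCubic, binaryQuadratic, binaryCubic, Matrix.of_apply,
      Matrix.cons_val, Fin.zero_eta, Fin.mk_one, Fin.reduceFinMk, map_add, map_zero,
      pderiv_mul, pderiv_pow, pderiv_X, pderiv_C, pderiv_one, pderiv_ofNat,
      Pi.single_apply, Fin.reduceEq, ↓reduceIte, Nat.cast_ofNat, Nat.add_one_sub_one] <;> ring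

lemma det_hessian_depressedCubic (a b c p q r s : R) :
    (hessian (depressedCubic a b c p q r s)).det =
      C (6 * (4 * a * c - b ^ 2)) * X 2 ^ 3 +
      C 24 * (C (a * r + 3 * c * p - b * q) * X 0 + C (3 * a * s + c * q - b * r) * X 1) *
        X 2 ^ 2 +
      (C 24 * binaryQuadratic (3 * p * r - q ^ 2) (9 * p * s - q * r) (3 * q * s - r ^ 2) -
        C (2 * (4 * a * c - b ^ 2)) * binaryQuadratic a b c) * X 2 +
      binaryCubic (8 * a * b * q - 8 * a ^ 2 * r - 6 * b ^ 2 * p)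
        (16 * a * c * q - 24 * a ^ 2 * s - 24 * b * c * p + 2 * b ^ 2 * q)
        (16 * a * c * r - 24 * a * b * s - 24 * c ^ 2 * p + 2 * b ^ 2 * r)
        (8 * b * c * r - 8 * c ^ 2 * q - 6 * b ^ 2 * s) := by
  simp only [hessian_depressedCubic, Matrix.det_fin_three, Matrix.of_apply, Matrix.cons_val,
    binaryQuadratic, binaryCubic, map_sub, map_add, map_mul, map_pow, map_ofNat]
  ring

lemma coeff_single_two_depressedCubic (a b c p q r s : R) :
    coeff (Finsupp.single 2 3) (depressedCubic a b c p q r s) = 1 := by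
  rw [← eval_single_eq_coeff (isHomogeneous_depressedCubic ..)]
  simp [depressedCubic, binaryQuadratic, binaryCubic]

lemma coeff_single_two_det_hessian_depressedCubic (a b c p q r s : R) :
    coeff (Finsupp.single 2 3) (hessian (depressedCubic a b c p q r s)).det =
      6 * (4 * a * c - b ^ 2) := by
  have hhom : (hessian (depressedCubic a b c p q r s)).det.IsHomogeneous 3 :=
    isHomogeneous_det_hessian (isHomogeneous_depressedCubic ..)
  rw [← eval_single_eq_coeff hhom, det_hessian_depressedCubic]
  simp [binaryQuadratic, binaryCubic]

/-- With `P, Q` the binary forms of the depressed cubic and `H` the Hessian determinant of binary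
forms, the right-hand side is `8 H(P) P - 6 H(Q) - 12 Ω(P, Q) X₃`, where
`Ω(P, Q) = P₁₁ Q₂₂ - 2 P₁₂ Q₁₂ + P₂₂ Q₁₁` in terms of second partial derivatives. -/
lemma pderiv_two_hessianDefect_depressedCubic (a b c p q r s : R) :
    pderiv 2 (hessianDefect (depressedCubic a b c p q r s)) =
      C (8 * (4 * a * c - b ^ 2)) * binaryQuadratic a b c -
      C 24 * binaryQuadratic (3 * p * r - q ^ 2) (9 * p * s - q * r) (3 * q * s - r ^ 2) -
      C 48 * (C (a * r + 3 * c * p - b * q) * X 0 + C (3 * a * s + c * q - b * r) * X 1) * X 2 := by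
  rw [hessianDefect, coeff_single_two_det_hessian_depressedCubic,
    coeff_single_two_depressedCubic, det_hessian_depressedCubic, depressedCubic]
  simp only [map_sub, map_add, pderiv_mul, pderiv_pow, pderiv_C, pderiv_X, Pi.single_apply,
    pderiv_two_binaryQuadratic, pderiv_two_binaryCubic, Fin.reduceEq, ↓reduceIte, Nat.cast_ofNat,
    Nat.add_one_sub_one]
  simp only [C_1, map_mul, map_ofNat, map_sub, map_pow]
  ring

lemma relations_of_pderiv_two_hessianDefect_eq_zero [IsDomain R] [CharZero R] {a b c p q r s : R}
    (h : pderiv 2 (hessianDefect (depressedCubic a b c p q r s)) = 0) :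
    a * r + 3 * c * p = b * q ∧ 3 * a * s + c * q = b * r ∧
      3 * (3 * p * r - q ^ 2) = (4 * a * c - b ^ 2) * a ∧
      3 * (9 * p * s - q * r) = (4 * a * c - b ^ 2) * b ∧
      3 * (3 * q * s - r ^ 2) = (4 * a * c - b ^ 2) * c := by
  rw [pderiv_two_hessianDefect_depressedCubic] at h
  have heval (x y z : R) := congrArg (eval ![x, y, z]) h
  simp only [binaryQuadratic, map_sub, map_add, map_mul, map_pow, eval_C, eval_X, map_zero,
    Matrix.cons_val] at heval
  have h8 : (8 : R) ≠ 0 := by norm_num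
  have h48 : (48 : R) ≠ 0 := by norm_num
  refine ⟨mul_left_cancel₀ h48 ?_, mul_left_cancel₀ h48 ?_, mul_left_cancel₀ h8 ?_,
    mul_left_cancel₀ h8 ?_, mul_left_cancel₀ h8 ?_⟩
  · linear_combination heval 1 0 0 - heval 1 0 1
  · linear_combination heval 0 1 0 - heval 0 1 1
  · linear_combination -heval 1 0 0
  · linear_combination heval 1 0 0 + heval 0 1 0 - heval 1 1 0
  · linear_combination -heval 0 1 0

lemma exists_eq_depressedCubic [IsDomain R] [CharZero R] {f : MvPolynomial (Fin 3) R}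
    (hf : f.IsHomogeneous 3) (hf22 : pderiv 2 (pderiv 2 f) = 6 * X 2) :
    ∃ a b c p q r s : R, f = depressedCubic a b c p q r s := by
  have hX2 := isHomogeneous_X R (2 : Fin 3)
  have hP : (pderiv 2 f - C 3 * X 2 ^ 2).IsHomogeneous 2 := hf.pderiv.sub ((hX2.pow 2).C_mul 3)
  obtain ⟨a, b, c, hPabc⟩ := exists_eq_binaryQuadratic hP (by
    rw [map_sub, hf22, pderiv_C_mul, pderiv_pow, pderiv_X_self, map_ofNat]
    push_cast
    ring)
  have hQ : (f - X 2 ^ 3 - binaryQuadratic a b c * X 2).IsHomogeneous 3 :=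
    (hf.sub (hX2.pow 3)).sub ((isHomogeneous_binaryQuadratic a b c).mul hX2)
  obtain ⟨p, q, r, s, hQpqrs⟩ := exists_eq_binaryCubic hQ (by
    rw [map_sub, map_sub, pderiv_pow, pderiv_mul, pderiv_X_self, pderiv_two_binaryQuadratic,
      ← hPabc, map_ofNat]
    push_cast
    ring)
  exact ⟨a, b, c, p, q, r, s, by rw [depressedCubic, ← hQpqrs]; ring⟩

end CommRing

section Field

variable {K : Type*} [Field K] [CharZero K]

lemma exists_linSubst_eq_depressedCubic {f : MvPolynomial (Fin 3) K} (hf : f.IsHomogeneous 3)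
    (hmonic : coeff (Finsupp.single 2 3) f = 1) :
    ∃ M : Matrix (Fin 3) (Fin 3) K, M.col 2 = Pi.single 2 1 ∧ IsUnit M.det ∧
      ∃ a b c p q r s : K, linSubst M f = depressedCubic a b c p q r s := by
  obtain ⟨u, v, hf22⟩ : ∃ u v : K, pderiv 2 (pderiv 2 f) = C u * X 0 + C v * X 1 + 6 * X 2 := by
    have hlead : coeff (Finsupp.single 2 1) (pderiv 2 (pderiv 2 f)) = 6 := by
      simp only [coeff_pderiv, ← Finsupp.single_add, Nat.reduceAdd, hmonic, Finsupp.single_eq_same]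
      norm_num
    have hlinear := eq_sum_C_mul_X_of_isHomogeneous_one
      ((hf.pderiv (i := 2)).pderiv (i := 2))
    rw [Fin.sum_univ_three, hlead, map_ofNat] at hlinear
    exact ⟨_, _, hlinear⟩
  let M : Matrix (Fin 3) (Fin 3) K := !![1, 0, 0; 0, 1, 0; -(u / 6), -(v / 6), 1]
  have hM : M.col 2 = Pi.single 2 1 := by ext i; fin_cases i <;> simp [M]
  have hdet : M.det = 1 := by simp [M, Matrix.det_fin_three]
  refine ⟨M, hM, hdet ▸ isUnit_one, exists_eq_depressedCubic (isHomogeneous_linSubst M hf) ?_⟩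
  rw [pderiv_linSubst_of_col_eq_single hM, pderiv_linSubst_of_col_eq_single hM, hf22]
  have hu : (C u : MvPolynomial (Fin 3) K) = 6 * C (u / 6) := by
    rw [← map_ofNat C 6, ← C_mul, mul_div_cancel₀ _ (by norm_num)]
  have hv : (C v : MvPolynomial (Fin 3) K) = 6 * C (v / 6) := by
    rw [← map_ofNat C 6, ← C_mul, mul_div_cancel₀ _ (by norm_num)]
  simp only [map_add, map_mul, map_ofNat, linSubst_X, linSubst_C, Fin.sum_univ_three, M,
    Matrix.of_apply, Matrix.cons_val, C_0, C_1, C_neg]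
  linear_combination X 0 * hu + X 1 * hv

lemma exists_common_linear_form {a b c p q r s : K} (hdisc : 4 * a * c - b ^ 2 = 0)
    (hx : a * r + 3 * c * p = b * q) (hy : 3 * a * s + c * q = b * r)
    (hpr : 3 * p * r = q ^ 2) (hps : 9 * p * s = q * r) (hqs : 3 * q * s = r ^ 2) :
    ∃ k d u v : K, (a = k * u ^ 2 ∧ b = 2 * k * (u * v) ∧ c = k * v ^ 2) ∧
      p = d * u ^ 3 ∧ q = 3 * d * (u ^ 2 * v) ∧ r = 3 * d * (u * v ^ 2) ∧ s = d * v ^ 3 := by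
  obtain rfl | hp := eq_or_ne p 0
  · obtain rfl : q = 0 := by simpa using hpr.symm
    obtain rfl : r = 0 := by simpa using hqs.symm
    obtain rfl | ha := eq_or_ne a 0
    · obtain rfl : b = 0 := by simpa using hdisc
      exact ⟨c, s, 0, 1, by simp, by simp⟩
    · obtain rfl : s = 0 := by simpa [ha] using hy
      refine ⟨a, 0, 1, b / (2 * a), ⟨by ring, by field_simp, ?_⟩, by simp⟩
      field_simp
      linear_combination hdisc
  · obtain ⟨v, rfl⟩ : ∃ v, q = 3 * p * v := ⟨q / (3 * p), by field_simp⟩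
    have h3p : 3 * p ≠ 0 := mul_ne_zero three_ne_zero hp
    obtain rfl : r = 3 * p * v ^ 2 := mul_left_cancel₀ h3p (by linear_combination hpr)
    obtain rfl : s = p * v ^ 3 := mul_left_cancel₀ (mul_ne_zero three_ne_zero h3p)
      (by linear_combination hps)
    obtain rfl : c = b * v - a * v ^ 2 := mul_left_cancel₀ h3p (by linear_combination hx)
    obtain rfl : b = 2 * a * v := by
      have hsq : (b - 2 * a * v) ^ 2 = 0 := by linear_combination -hdisc
      exact sub_eq_zero.mp (pow_eq_zero_iff two_ne_zero |>.mp hsq)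
    exact ⟨a, p, 1, v, ⟨by ring, by ring, by ring⟩, by ring, by ring, by ring, by ring⟩

variable [IsAlgClosed K]

lemma exists_mul_eq_quadratic (a b c : K) :
    ∃ l₀ l₁ m₀ m₁ : K, l₀ * m₀ = a ∧ l₀ * m₁ + l₁ * m₀ = b ∧ l₁ * m₁ = c := by
  obtain rfl | ha := eq_or_ne a 0
  · exact ⟨0, 1, b, c, by ring, by ring, by ring⟩
  · obtain ⟨d, hd⟩ := IsAlgClosed.exists_pow_nat_eq (discrim a b c) two_pos
    refine ⟨a, (b + d) / 2, 1, (b - d) / (2 * a), by ring, by field_simp; ring, ?_⟩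
    rw [discrim] at hd
    field_simp
    linear_combination -hd

lemma exists_linSubst_depressedCubic_eq_of_disc_ne_zero {a b c : K}
    (hdisc : 4 * a * c - b ^ 2 ≠ 0) (p q r s : K) :
    ∃ M : Matrix (Fin 3) (Fin 3) K, M.col 2 = Pi.single 2 1 ∧ IsUnit M.det ∧
      ∃ p' q' r' s' : K,
        linSubst M (depressedCubic a b c p q r s) = depressedCubic 0 1 0 p' q' r' s' := by
  obtain ⟨l₀, l₁, m₀, m₁, rfl, rfl, rfl⟩ := exists_mul_eq_quadratic a b c
  let L : Matrix (Fin 3) (Fin 3) K := !![l₀, l₁, 0; m₀, m₁, 0; 0, 0, 1]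
  have hLdet : IsUnit L.det := by
    refine isUnit_iff_ne_zero.mpr fun h => hdisc ?_
    simp only [L, Matrix.det_fin_three, Matrix.of_apply, Matrix.cons_val] at h
    linear_combination -(l₀ * m₁ - l₁ * m₀) * h
  have hL : L.col 2 = Pi.single 2 1 := by ext i; fin_cases i <;> simp [L]
  have hM : L⁻¹.col 2 = Pi.single 2 1 := col_inv_eq_single hLdet hL
  have linSubst_inv (f : MvPolynomial (Fin 3) K) : linSubst L⁻¹ (linSubst L f) = f := by
    rw [linSubst_linSubst, Matrix.mul_nonsing_inv L hLdet, linSubst_one]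
  have hX2 : linSubst L⁻¹ (X 2) = X 2 := by
    conv_lhs => rw [show X 2 = linSubst L (X 2) by simp [linSubst_X, L, Fin.sum_univ_three]]
    exact linSubst_inv _
  have hP : linSubst L⁻¹ (binaryQuadratic (l₀ * m₀) (l₀ * m₁ + l₁ * m₀) (l₁ * m₁)) =
      binaryQuadratic 0 1 0 := by
    convert linSubst_inv (binaryQuadratic 0 1 0) using 2
    simp only [binaryQuadratic, map_add, map_mul, map_pow, map_zero, map_one, linSubst_X,
      Fin.sum_univ_three, L, Matrix.of_apply, Matrix.cons_val]
    ring
  obtain ⟨p', q', r', s', hQ⟩ := exists_eq_binaryCubic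
    (isHomogeneous_linSubst L⁻¹ (isHomogeneous_binaryCubic p q r s))
    (by rw [pderiv_linSubst_of_col_eq_single hM, pderiv_two_binaryCubic, map_zero])
  refine ⟨L⁻¹, hM, Matrix.isUnit_nonsing_inv_det L hLdet, p', q', r', s', ?_⟩
  simp only [depressedCubic, map_add, map_mul, map_pow, hX2, hP, hQ]

lemma isProductOfLinearForms_depressedCubic_of_disc_ne_zero {a b c p q r s : K}
    (hdisc : 4 * a * c - b ^ 2 ≠ 0)
    (h : pderiv 2 (hessianDefect (depressedCubic a b c p q r s)) = 0) :
    IsProductOfLinearForms (depressedCubic a b c p q r s) := by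
  obtain ⟨M, hM, hdet, p', q', r', s', hnormal⟩ :=
    exists_linSubst_depressedCubic_eq_of_disc_ne_zero hdisc p q r s
  refine IsProductOfLinearForms.of_linSubst hdet ?_
  have h' := pderiv_two_hessianDefect_linSubst hM (isHomogeneous_depressedCubic ..) h
  rw [hnormal] at h' ⊢
  obtain ⟨hq, hr, -, hps, -⟩ := relations_of_pderiv_two_hessianDefect_eq_zero h'
  obtain rfl : q' = 0 := by simpa using hq.symm
  obtain rfl : r' = 0 := by simpa using hr.symm
  have := isProductOfLinearForms_cube_add_mul_add_cubes (isHomogeneous_X K (0 : Fin 3))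
    (isHomogeneous_X K 1) (isHomogeneous_X K 2) (α := p') (β := s')
    (by linear_combination hps)
  simpa [depressedCubic, binaryQuadratic, binaryCubic] using this

lemma isProductOfLinearForms_depressedCubic_of_disc_eq_zero {a b c p q r s : K}
    (hdisc : 4 * a * c - b ^ 2 = 0)
    (h : pderiv 2 (hessianDefect (depressedCubic a b c p q r s)) = 0) :
    IsProductOfLinearForms (depressedCubic a b c p q r s) := by
  obtain ⟨hx, hy, hpr, hps, hqs⟩ := relations_of_pderiv_two_hessianDefect_eq_zero h
  simp only [hdisc, zero_mul, mul_eq_zero, three_ne_zero, false_or, sub_eq_zero] at hpr hps hqs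
  obtain ⟨k, d, u, v, ⟨rfl, rfl, rfl⟩, rfl, rfl, rfl, rfl⟩ :=
    exists_common_linear_form hdisc hx hy hpr hps hqs
  have hl : (C u * X 0 + C v * X 1 : MvPolynomial (Fin 3) K).IsHomogeneous 1 :=
    ((isHomogeneous_X K 0).C_mul u).add ((isHomogeneous_X K 1).C_mul v)
  have hfactor : depressedCubic (k * u ^ 2) (2 * k * (u * v)) (k * v ^ 2) (d * u ^ 3)
      (3 * d * (u ^ 2 * v)) (3 * d * (u * v ^ 2)) (d * v ^ 3) =
      X 2 ^ 3 + C k * (C u * X 0 + C v * X 1) ^ 2 * X 2 + C d * (C u * X 0 + C v * X 1) ^ 3 := by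
    simp only [depressedCubic, binaryQuadratic, binaryCubic, map_mul, map_pow, map_ofNat]
    ring
  rw [hfactor]
  exact isProductOfLinearForms_cube_add_sq_mul_add_cube (isHomogeneous_X K 2) hl k d

lemma isProductOfLinearForms_of_pderiv_two_hessianDefect_eq_zero {f : MvPolynomial (Fin 3) K}
    (hf : f.IsHomogeneous 3) (hlead : coeff (Finsupp.single 2 3) f ≠ 0)
    (h : pderiv 2 (hessianDefect f) = 0) : IsProductOfLinearForms f := by
  set F := coeff (Finsupp.single 2 3) f
  have hmonic : coeff (Finsupp.single 2 3) (C F⁻¹ * f) = 1 := by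
    rw [coeff_C_mul, inv_mul_cancel₀ hlead]
  have hscaled : pderiv 2 (hessianDefect (C F⁻¹ * f)) = 0 := by
    rw [hessianDefect_C_mul, pderiv_C_mul, h, mul_zero]
  obtain ⟨M, hM, hdet, a, b, c, p, q, r, s, hdepressed⟩ :=
    exists_linSubst_eq_depressedCubic (hf.C_mul F⁻¹) hmonic
  have h' := pderiv_two_hessianDefect_linSubst hM (hf.C_mul F⁻¹) hscaled
  rw [hdepressed] at h'
  have hprod : IsProductOfLinearForms (C F⁻¹ * f) := by
    refine IsProductOfLinearForms.of_linSubst hdet ?_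
    rw [hdepressed]
    by_cases hdisc : 4 * a * c - b ^ 2 = 0
    · exact isProductOfLinearForms_depressedCubic_of_disc_eq_zero hdisc h'
    · exact isProductOfLinearForms_depressedCubic_of_disc_ne_zero hdisc h'
  simpa only [← mul_assoc, ← C_mul, mul_inv_cancel₀ hlead, C_1, one_mul] using hprod.C_mul F

end Field

end DepressedCubic

theorem stmt17_general {K : Type*} [Field K] [IsAlgClosed K] [CharZero K]
    (f : MvPolynomial (Fin 3) K) (hf : f.IsHomogeneous 3)
    (h333 : f.coeff (Finsupp.single 2 3) ≠ 0) :
    IsProductOfLinearForms f ↔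
      (hessianDefect f).coeff (Finsupp.single 0 2 + Finsupp.single 2 1) = 0 ∧
      (hessianDefect f).coeff (Finsupp.single 0 1 + Finsupp.single 1 1 + Finsupp.single 2 1) = 0 ∧
      (hessianDefect f).coeff (Finsupp.single 1 2 + Finsupp.single 2 1) = 0 ∧
      (hessianDefect f).coeff (Finsupp.single 0 1 + Finsupp.single 2 2) = 0 ∧
      (hessianDefect f).coeff (Finsupp.single 1 1 + Finsupp.single 2 2) = 0 := by
  rw [← pderiv_two_hessianDefect_iff hf]
  refine ⟨fun hprod => ?_, isProductOfLinearForms_of_pderiv_two_hessianDefect_eq_zero hf h333⟩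
  rw [hprod.hessianDefect_eq_zero, map_zero]

theorem stmt17 (f : MvPolynomial (Fin 3) ℂ) (hf : f.IsHomogeneous 3)
    (h333 : f.coeff (Finsupp.single 2 3) ≠ 0) :
    CompletelyReducible f ↔
      ∀ g : MvPolynomial (Fin 3) ℂ,
        g = C ((hessianDet f).coeff (Finsupp.single 2 3)) * f -
              C (f.coeff (Finsupp.single 2 3)) * hessianDet f →
        g.coeff (Finsupp.single 0 2 + Finsupp.single 2 1) = 0 ∧
        g.coeff (Finsupp.single 0 1 + Finsupp.single 1 1 + Finsupp.single 2 1) = 0 ∧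
        g.coeff (Finsupp.single 1 2 + Finsupp.single 2 1) = 0 ∧
        g.coeff (Finsupp.single 0 1 + Finsupp.single 2 2) = 0 ∧
        g.coeff (Finsupp.single 1 1 + Finsupp.single 2 2) = 0 := by
  exact ⟨fun h g hg => hg ▸ (stmt17_general f hf h333).mp h,
    fun h => (stmt17_general f hf h333).mpr (h _ rfl)⟩
end
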